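/- arXiv:2309.07004 — 2 statements merged into one kernel-verified Lean document; each statement's English description precedes it below -/
import Mathlib

section
/- There exist a radius r > 0 and real sequences (a_j)_{j≥1}, (b_j)_{j≥1} such that the power series ∑_{j≥1} a_j s^j and ∑_{j≥1} b_j s^j converge absolutely for 0 < s < r, and for all s ∈ (0, r): F(s) = −(1/2) log s + log 8 − 2 + ∑_{j≥1} (a_j s^j + b_j s^j log s), where F(s) = ∫_0^π cos(t)/√(2(1 − cos t) + s) dt. -/
/-- The profile function of the fundamental solution of `div((1/r)∇·)`. -/
noncomputable def Fprof (s : ℝ) : ℝ :=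
  ∫ t in (0 : ℝ)..Real.pi, Real.cos t / Real.sqrt (2 * (1 - Real.cos t) + s)

/-!
Integration by parts in `t` shows that `F` solves the Sturm–Liouville equation
`(s (4 + s) F')' = (3 / 4) F` on `s > 0`. At `s = 0` the equation has a regular singular point, and
`u(s) = ₂F₁(-1/2, 3/2; 1; -s/4)` is a solution analytic there with `u(0) = 1`. Constancy of the
Wronskian gives `(F / u)' = C / (s (4 + s) u ^ 2)`, whose right-hand side is an analytic function
divided by `s`; integrating, `F / u` is a multiple of `log s` plus an analytic function.

The leading part comes from writing `cos t = cos (t/2) + g(t) * 2 sin (t/2)`. As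
`2 (1 - cos t) = (2 sin (t/2)) ^ 2`, the first term integrates to `arsinh (2 / √s)`, which is
`log 4 - (1/2) log s + o(1)`, and the contribution of the second converges to
`∫₀^π g = log 2 - 2`.
-/

open Filter MeasureTheory Set Topology
open scoped Real

section PowerSeries

variable {𝕜 : Type*}

theorem hasFPowerSeriesOnBall_deriv [NontriviallyNormedField 𝕜] [CompleteSpace 𝕜]
    {f : 𝕜 → 𝕜} {c : ℕ → 𝕜} {x : 𝕜} {r : ENNReal}
    (hf : HasFPowerSeriesOnBall f (.ofScalars 𝕜 c) x r) :
    HasFPowerSeriesOnBall (deriv f) (.ofScalars 𝕜 fun n ↦ (n + 1) * c (n + 1)) x r := by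
  have heval := (ContinuousLinearMap.apply 𝕜 𝕜 (1 : 𝕜)).comp_hasFPowerSeriesOnBall hf.fderiv
  have hfun : ContinuousLinearMap.apply 𝕜 𝕜 (1 : 𝕜) ∘ fderiv 𝕜 f = deriv f := by
    ext y
    simp
  rw [hfun] at heval
  convert heval using 1
  ext n
  simp

theorem radius_ofScalars_coeff_div_pos [RCLike 𝕜] {p : FormalMultilinearSeries 𝕜 𝕜 𝕜}
    (hp : 0 < p.radius) :
    0 < (FormalMultilinearSeries.ofScalars 𝕜 fun n ↦ p.coeff (n - 1) / n).radius := by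
  obtain ⟨δ, hδ, hδp⟩ := ENNReal.lt_iff_exists_nnreal_btwn.1 hp
  obtain ⟨C, hC, hbound⟩ := p.norm_mul_pow_le_of_lt_radius hδp
  refine hδ.trans_le (FormalMultilinearSeries.le_radius_of_bound _ (C * δ) fun n ↦ ?_)
  -- The zeroth coefficient is `p.coeff 0 / 0 = 0`.
  rcases n with _ | n
  · simpa using mul_nonneg hC.le δ.coe_nonneg
  · calc _ = ‖p.coeff n‖ * δ ^ n * δ / (n + 1 : ℕ) := by
          rw [FormalMultilinearSeries.ofScalars_norm, Nat.add_sub_cancel, norm_div,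
            RCLike.norm_natCast]
          ring
      _ ≤ ‖p.coeff n‖ * δ ^ n * δ := div_le_self (by positivity) (by simp)
      _ ≤ C * δ := by
          gcongr
          simpa using hbound n

theorem exists_analyticAt_primitive [RCLike 𝕜] {f : 𝕜 → 𝕜} {x : 𝕜} (hf : AnalyticAt 𝕜 f x) :
    ∃ F : 𝕜 → 𝕜, AnalyticAt 𝕜 F x ∧ ∀ᶠ y in 𝓝 x, HasDerivAt F (f y) y := by
  obtain ⟨p, hp⟩ := hf
  set q : FormalMultilinearSeries 𝕜 𝕜 𝕜 := .ofScalars 𝕜 fun n ↦ p.coeff (n - 1) / n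
  obtain ⟨F, hF⟩ : ∃ F : 𝕜 → 𝕜, HasFPowerSeriesOnBall F q x q.radius :=
    ⟨_, by simpa using
      (q.hasFPowerSeriesOnBall (radius_ofScalars_coeff_div_pos hp.radius_pos)).comp_sub x⟩
  have hcoeff : FormalMultilinearSeries.ofScalars 𝕜
      (fun n : ℕ ↦ (n + 1 : 𝕜) * (p.coeff (n + 1 - 1) / (n + 1 : ℕ))) = p := by
    ext n
    simp [mul_div_cancel₀, Nat.cast_add_one_ne_zero]
  have hderiv : HasFPowerSeriesAt (deriv F) p x :=
    hcoeff ▸ (hasFPowerSeriesOnBall_deriv hF).hasFPowerSeriesAt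
  refine ⟨F, hF.analyticAt, ?_⟩
  filter_upwards [hF.analyticAt.eventually_analyticAt, hderiv.eventually_hasSum_sub,
    hp.eventually_hasSum_sub] with y hFy hderivy hfy
  exact hderivy.unique hfy ▸ hFy.differentiableAt.hasDerivAt

theorem eventually_hasSum_taylor [NontriviallyNormedField 𝕜] [CompleteSpace 𝕜] [CharZero 𝕜]
    {f : 𝕜 → 𝕜} (hf : AnalyticAt 𝕜 f 0) :
    ∀ᶠ z in 𝓝 0, HasSum (fun n ↦ iteratedDeriv n f 0 / n.factorial * z ^ n) (f z) := by
  filter_upwards [hf.hasFPowerSeriesAt.eventually_hasSum_sub] with z hz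
  simpa [mul_comm] using hz

theorem hasSum_of_hasFPowerSeriesOnBall_ofScalars [NontriviallyNormedField 𝕜]
    {f : 𝕜 → 𝕜} {d : ℕ → 𝕜} {z : 𝕜} {r : ENNReal}
    (hf : HasFPowerSeriesOnBall f (.ofScalars 𝕜 d) 0 r) (hz : z ∈ Metric.eball 0 r) :
    HasSum (fun n ↦ d n * z ^ n) (f z) := by
  simpa [mul_comm] using hf.hasSum hz

theorem hasSum_self_mul_of_hasSum_succ [CommRing 𝕜] [TopologicalSpace 𝕜] [IsTopologicalRing 𝕜]
    {d : ℕ → 𝕜} {z y : 𝕜} (h0 : d 0 = 0) (h : HasSum (fun n ↦ d (n + 1) * z ^ n) y) :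
    HasSum (fun n ↦ d n * z ^ n) (z * y) := by
  rw [← hasSum_nat_add_iff' 1]
  simp only [Finset.sum_range_one, h0, zero_mul, sub_zero]
  exact (h.mul_left z).congr_fun fun n ↦ by ring

end PowerSeries

section Hypergeometric

variable {𝕜 : Type*}

theorem one_le_radius_ordinaryHypergeometricSeries [RCLike 𝕜] (a b c : 𝕜) :
    1 ≤ (ordinaryHypergeometricSeries 𝕜 a b c).radius := by
  by_cases habc : ∀ k : ℕ, (k : 𝕜) ≠ -a ∧ (k : 𝕜) ≠ -b ∧ (k : 𝕜) ≠ -c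
  · exact (ordinaryHypergeometricSeries_radius_eq_one 𝕜 a b c habc).ge
  · push Not at habc
    obtain ⟨k, hk⟩ := habc
    have htop : (ordinaryHypergeometricSeries 𝕜 a b c).radius = ⊤ := by
      refine FormalMultilinearSeries.radius_eq_top_of_forall_image_add_eq_zero _ (k + 1) fun n ↦ ?_
      exact ordinaryHypergeometricSeries_eq_zero_of_neg_nat a b c (k := k) (by tauto) (by lia)
    exact htop ▸ le_top

theorem hasFPowerSeriesOnBall_ordinaryHypergeometric [RCLike 𝕜] (a b c : 𝕜) :
    HasFPowerSeriesOnBall (₂F₁ a b c)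
      (.ofScalars 𝕜 (ordinaryHypergeometricCoefficient a b c)) 0 1 :=
  have hradius := one_le_radius_ordinaryHypergeometricSeries a b c
  ((ordinaryHypergeometricSeries 𝕜 a b c).hasFPowerSeriesOnBall
    (one_pos.trans_le hradius)).mono one_pos hradius

theorem ordinaryHypergeometricCoefficient_succ [Field 𝕜] [CharZero 𝕜] {a b c : 𝕜}
    (hc : ∀ k : ℕ, (k : 𝕜) ≠ -c) (n : ℕ) :
    (n + 1) * (c + n) * ordinaryHypergeometricCoefficient a b c (n + 1) =
      (a + n) * (b + n) * ordinaryHypergeometricCoefficient a b c n := by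
  have hcn : c + n ≠ 0 := fun h ↦ hc n (by linear_combination h)
  have hpoch : (ascPochhammer 𝕜 n).eval c ≠ 0 := fun h ↦
    have ⟨k, _, hk⟩ := (ascPochhammer_eval_eq_zero_iff n c).1 h
    hc k hk
  have hn : (n + 1 : 𝕜) ≠ 0 := by exact_mod_cast n.succ_ne_zero
  have hfact : (n.factorial : 𝕜) ≠ 0 := by exact_mod_cast n.factorial_ne_zero
  simp only [ordinaryHypergeometricCoefficient, ascPochhammer_succ_eval, Nat.factorial_succ]
  push_cast
  field_simp

theorem hypergeometric_ode_of_recurrence [NontriviallyNormedField 𝕜] [CompleteSpace 𝕜]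
    {F : 𝕜 → 𝕜} {d : ℕ → 𝕜} {a b c z : 𝕜} {r : ENNReal}
    (hF : HasFPowerSeriesOnBall F (.ofScalars 𝕜 d) 0 r)
    (hd : ∀ n : ℕ, (n + 1) * (c + n) * d (n + 1) = (a + n) * (b + n) * d n)
    (hz : z ∈ Metric.eball 0 r) :
    z * (1 - z) * deriv (deriv F) z + (c - (a + b + 1) * z) * deriv F z = a * b * F z := by
  have hF' := hasFPowerSeriesOnBall_deriv hF
  have hF'' := hasFPowerSeriesOnBall_deriv hF'
  have h0 : HasSum (fun n ↦ d n * z ^ n) (F z) := hasSum_of_hasFPowerSeriesOnBall_ofScalars hF hz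
  have h1 : HasSum (fun n : ℕ ↦ (n + 1) * d (n + 1) * z ^ n) (deriv F z) :=
    hasSum_of_hasFPowerSeriesOnBall_ofScalars hF' hz
  have h1z : HasSum (fun n : ℕ ↦ n * d n * z ^ n) (z * deriv F z) :=
    hasSum_self_mul_of_hasSum_succ (by simp) (by simpa using h1)
  have h2z : HasSum (fun n : ℕ ↦ n * (n + 1) * d (n + 1) * z ^ n) (z * deriv (deriv F) z) :=
    hasSum_self_mul_of_hasSum_succ (by simp)
      (by simpa [mul_assoc] using hasSum_of_hasFPowerSeriesOnBall_ofScalars hF'' hz)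
  have h2zz : HasSum (fun n : ℕ ↦ (n - 1) * n * d n * z ^ n) (z * (z * deriv (deriv F) z)) :=
    hasSum_self_mul_of_hasSum_succ (by simp) (by simpa using h2z)
  have hlhs := (h2z.sub h2zz).add ((h1.mul_left c).sub (h1z.mul_left (a + b + 1)))
  have heq := hlhs.unique ((h0.mul_left (a * b)).congr_fun fun n ↦ by
    linear_combination z ^ n * hd n)
  linear_combination heq

theorem ordinaryHypergeometric_ode [RCLike 𝕜] {a b c z : 𝕜} (hc : ∀ k : ℕ, (k : 𝕜) ≠ -c)
    (hz : z ∈ Metric.eball 0 1) :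
    z * (1 - z) * deriv (deriv (₂F₁ a b c)) z + (c - (a + b + 1) * z) * deriv (₂F₁ a b c) z =
      a * b * (₂F₁ a b c : 𝕜 → 𝕜) z :=
  hypergeometric_ode_of_recurrence (hasFPowerSeriesOnBall_ordinaryHypergeometric a b c)
    (ordinaryHypergeometricCoefficient_succ hc) hz

end Hypergeometric

section SturmLiouville

/-- `f` solves the Sturm–Liouville equation `(P f')' = q f` near the filter `l`. The derivative is
carried as a witness `f'`, so that differentiability is part of the notion. -/
def IsSturmLiouvilleSolution (l : Filter ℝ) (P q f : ℝ → ℝ) : Prop :=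
  ∃ f' : ℝ → ℝ, (∀ᶠ s in l, HasDerivAt f (f' s) s) ∧
    ∀ᶠ s in l, HasDerivAt (fun s ↦ P s * f' s) (q s * f s) s

/-- `f` is log-analytic at `0⁺`: it equals `A + B log` on some interval `(0, r)`, where `A` and `B`
are analytic at `0`. -/
def IsLogAnalytic (f : ℝ → ℝ) : Prop :=
  ∃ A B : ℝ → ℝ, AnalyticAt ℝ A 0 ∧ AnalyticAt ℝ B 0 ∧
    ∀ᶠ s in 𝓝[>] 0, f s = A s + B s * Real.log s

theorem IsSturmLiouvilleSolution.mono {l l' : Filter ℝ} {P q f : ℝ → ℝ}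
    (hf : IsSturmLiouvilleSolution l P q f) (hl : l' ≤ l) : IsSturmLiouvilleSolution l' P q f := by
  obtain ⟨f', hf', hode⟩ := hf
  exact ⟨f', hf'.filter_mono hl, hode.filter_mono hl⟩

theorem IsLogAnalytic.congr {f g : ℝ → ℝ} (hf : IsLogAnalytic f) (hfg : f =ᶠ[𝓝[>] 0] g) :
    IsLogAnalytic g := by
  obtain ⟨A, B, hA, hB, hfAB⟩ := hf
  exact ⟨A, B, hA, hB, hfg.symm.trans hfAB⟩

theorem exists_eventually_eq_const_of_hasDerivAt_zero {g : ℝ → ℝ} {a : ℝ}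
    (hg : ∀ᶠ s in 𝓝[>] a, HasDerivAt g 0 s) : ∃ C, ∀ᶠ s in 𝓝[>] a, g s = C := by
  obtain ⟨r, hr, hsub⟩ := mem_nhdsGT_iff_exists_Ioo_subset.1 hg
  obtain ⟨C, hC⟩ := isOpen_Ioo.exists_is_const_of_deriv_eq_zero isPreconnected_Ioo
    (fun s hs ↦ (hsub hs).differentiableAt.differentiableWithinAt) fun s hs ↦ (hsub hs).deriv
  exact ⟨C, mem_of_superset (Ioo_mem_nhdsGT hr) hC⟩

theorem IsSturmLiouvilleSolution.exists_hasDerivAt_div {P q f u : ℝ → ℝ} {a : ℝ}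
    (hf : IsSturmLiouvilleSolution (𝓝[>] a) P q f)
    (hu : IsSturmLiouvilleSolution (𝓝[>] a) P q u)
    (hP : ∀ᶠ s in 𝓝[>] a, P s ≠ 0) (hu0 : ∀ᶠ s in 𝓝[>] a, u s ≠ 0) :
    ∃ C, ∀ᶠ s in 𝓝[>] a, HasDerivAt (fun s ↦ f s / u s) (C / (P s * u s ^ 2)) s := by
  obtain ⟨f', hf', hPf'⟩ := hf
  obtain ⟨u', hu', hPu'⟩ := hu
  have hwronskian : ∀ᶠ s in 𝓝[>] a,
      HasDerivAt (fun s ↦ P s * f' s * u s - f s * (P s * u' s)) 0 s := by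
    filter_upwards [hf', hPf', hu', hPu'] with s hf' hPf' hu' hPu'
    exact ((hPf'.mul hu').sub (hf'.mul hPu')).congr_deriv (by ring)
  obtain ⟨C, hC⟩ := exists_eventually_eq_const_of_hasDerivAt_zero hwronskian
  refine ⟨C, ?_⟩
  filter_upwards [hf', hu', hC, hP, hu0] with s hf' hu' hC hP hu0
  refine (hf'.div hu' hu0).congr_deriv ?_
  rw [← hC]
  field_simp

theorem exists_analyticAt_hasDerivAt_log_add {k : ℝ → ℝ} (hk : AnalyticAt ℝ k 0) :
    ∃ H : ℝ → ℝ, AnalyticAt ℝ H 0 ∧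
      ∀ᶠ s in 𝓝[>] 0, HasDerivAt (fun s ↦ k 0 * Real.log s + H s) (k s / s) s := by
  have hslope : AnalyticAt ℝ (dslope k 0) 0 :=
    hk.hasFPowerSeriesAt.has_fpower_series_dslope_fslope.analyticAt
  obtain ⟨H, hH, hderiv⟩ := exists_analyticAt_primitive hslope
  refine ⟨H, hH, ?_⟩
  filter_upwards [nhdsWithin_le_nhds hderiv, self_mem_nhdsWithin] with s hs (hs0 : 0 < s)
  refine (((Real.hasDerivAt_log hs0.ne').const_mul (k 0)).add hs).congr_deriv ?_
  have hk_eq : s * dslope k 0 s = k s - k 0 := by simpa using sub_smul_dslope k 0 s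
  field_simp
  linarith

theorem IsSturmLiouvilleSolution.isLogAnalytic {w q f u : ℝ → ℝ}
    (hf : IsSturmLiouvilleSolution (𝓝[>] 0) (fun s ↦ s * w s) q f)
    (hu : IsSturmLiouvilleSolution (𝓝[>] 0) (fun s ↦ s * w s) q u)
    (hw : AnalyticAt ℝ w 0) (hw0 : w 0 ≠ 0) (hu_an : AnalyticAt ℝ u 0) (hu0 : u 0 ≠ 0) :
    IsLogAnalytic f := by
  have hw_ne := nhdsWithin_le_nhds (s := Ioi 0) (hw.continuousAt.eventually_ne hw0)
  have hu_ne := nhdsWithin_le_nhds (s := Ioi 0) (hu_an.continuousAt.eventually_ne hu0)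
  have hP_ne : ∀ᶠ s in 𝓝[>] 0, s * w s ≠ 0 := by
    filter_upwards [hw_ne, self_mem_nhdsWithin] with s hws (hs : 0 < s)
    exact mul_ne_zero hs.ne' hws
  obtain ⟨C, hquot⟩ := hf.exists_hasDerivAt_div hu hP_ne hu_ne
  set k : ℝ → ℝ := fun s ↦ C / (w s * u s ^ 2)
  have hk : AnalyticAt ℝ k 0 :=
    analyticAt_const.div (hw.mul (hu_an.pow 2)) (mul_ne_zero hw0 (pow_ne_zero 2 hu0))
  obtain ⟨H, hH, hprim⟩ := exists_analyticAt_hasDerivAt_log_add hk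
  have hdiff : ∀ᶠ s in 𝓝[>] 0,
      HasDerivAt (fun s ↦ f s / u s - (k 0 * Real.log s + H s)) 0 s := by
    filter_upwards [hquot, hprim] with s hquot hprim
    refine (hquot.sub hprim).congr_deriv (sub_eq_zero.2 ?_)
    rw [div_div, mul_comm _ s, mul_assoc]
  obtain ⟨D, hD⟩ := exists_eventually_eq_const_of_hasDerivAt_zero hdiff
  refine ⟨fun s ↦ u s * (H s + D), fun s ↦ u s * k 0, hu_an.mul (hH.add analyticAt_const),
    hu_an.mul analyticAt_const, ?_⟩
  filter_upwards [hD, hu_ne] with s hs hus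
  rw [← hs]
  field_simp
  ring

theorem tendsto_mul_log_nhdsGT_zero_of_differentiableAt {B : ℝ → ℝ}
    (hB : DifferentiableAt ℝ B 0) (hB0 : B 0 = 0) :
    Tendsto (fun s ↦ B s * Real.log s) (𝓝[>] 0) (𝓝 0) := by
  have hlog : Tendsto (fun s ↦ Real.log s * s) (𝓝[>] 0) (𝓝 0) := by
    simpa using tendsto_log_mul_rpow_nhdsGT_zero one_pos
  have hlim := ((continuousAt_dslope_same.2 hB).tendsto.mono_left nhdsWithin_le_nhds).mul hlog
  rw [mul_zero] at hlim
  refine hlim.congr fun s ↦ ?_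
  have hBs : s * dslope B 0 s = B s := by simpa [hB0] using sub_smul_dslope B 0 s
  linear_combination Real.log s * hBs

theorem eq_and_eq_of_tendsto_add_mul_log {A B : ℝ → ℝ} {L : ℝ} (hA : ContinuousAt A 0)
    (hB : DifferentiableAt ℝ B 0)
    (hlim : Tendsto (fun s ↦ A s + B s * Real.log s) (𝓝[>] 0) (𝓝 L)) : A 0 = L ∧ B 0 = 0 := by
  have hAlim := hA.tendsto.mono_left (nhdsWithin_le_nhds (s := Ioi 0))
  have hBlim := hB.continuousAt.tendsto.mono_left (nhdsWithin_le_nhds (s := Ioi 0))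
  have hB0 : B 0 = 0 := by
    have hquot := (hlim.sub hAlim).mul Real.tendsto_log_nhdsGT_zero.inv_tendsto_atBot
    rw [mul_zero] at hquot
    refine tendsto_nhds_unique (hBlim.congr' ?_) hquot
    filter_upwards [Ioo_mem_nhdsGT one_pos] with s hs
    have hlog : Real.log s ≠ 0 := (Real.log_neg hs.1 hs.2).ne
    simp [hlog]
  have hBlog := tendsto_mul_log_nhdsGT_zero_of_differentiableAt hB hB0
  exact ⟨tendsto_nhds_unique (by simpa using hAlim.add hBlog) hlim, hB0⟩

theorem IsLogAnalytic.exists_hasSum {f : ℝ → ℝ} {β L : ℝ} (hf : IsLogAnalytic f)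
    (hlim : Tendsto (fun s ↦ f s - β * Real.log s) (𝓝[>] 0) (𝓝 L)) :
    ∃ (r : ℝ) (a b : ℕ → ℝ), 0 < r ∧ a 0 = L ∧ b 0 = β ∧ ∀ s ∈ Ioo 0 r,
      Summable (fun n ↦ a n * s ^ n) ∧ Summable (fun n ↦ b n * s ^ n) ∧
      HasSum (fun n ↦ a n * s ^ n + b n * s ^ n * Real.log s) (f s) := by
  obtain ⟨A, B, hA, hB, hfAB⟩ := hf
  have hconst : A 0 = L ∧ B 0 - β = 0 := by
    refine eq_and_eq_of_tendsto_add_mul_log (B := fun s ↦ B s - β) hA.continuousAt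
      (hB.differentiableAt.sub_const β) (hlim.congr' ?_)
    filter_upwards [hfAB] with s hs
    rw [hs]
    ring
  have hexp : ∀ᶠ s in 𝓝[>] 0, f s = A s + B s * Real.log s ∧
      HasSum (fun n ↦ iteratedDeriv n A 0 / n.factorial * s ^ n) (A s) ∧
      HasSum (fun n ↦ iteratedDeriv n B 0 / n.factorial * s ^ n) (B s) :=
    hfAB.and (nhdsWithin_le_nhds ((eventually_hasSum_taylor hA).and (eventually_hasSum_taylor hB)))
  obtain ⟨r, hr, hsub⟩ := mem_nhdsGT_iff_exists_Ioo_subset.1 hexp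
  refine ⟨r, fun n ↦ iteratedDeriv n A 0 / n.factorial, fun n ↦ iteratedDeriv n B 0 / n.factorial,
    hr, by simpa using hconst.1, by simpa using sub_eq_zero.1 hconst.2, fun s hs ↦ ?_⟩
  obtain ⟨hfs, hAs, hBs⟩ := hsub hs
  exact ⟨hAs.summable, hBs.summable, hfs ▸ hAs.add (hBs.mul_right _)⟩

theorem isSturmLiouvilleSolution_ordinaryHypergeometric (a : ℝ) :
    IsSturmLiouvilleSolution (𝓝 0) (fun s ↦ s * (4 + s)) (fun _ ↦ a * (a - 1))
      (fun s ↦ ₂F₁ a (1 - a) 1 (-s / 4)) := by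
  set F : ℝ → ℝ := ₂F₁ a (1 - a) 1
  have hF := hasFPowerSeriesOnBall_ordinaryHypergeometric a (1 - a) 1
  have hz (s : ℝ) : HasDerivAt (fun s : ℝ ↦ -s / 4) (-1 / 4) s := (hasDerivAt_neg s).div_const 4
  have hball : ∀ᶠ s : ℝ in 𝓝 0, -s / 4 ∈ Metric.eball 0 1 :=
    (hz 0).continuousAt (by simpa using Metric.eball_mem_nhds (0 : ℝ) one_pos)
  refine ⟨fun s ↦ deriv F (-s / 4) * (-1 / 4), ?_, ?_⟩
  · filter_upwards [hball] with s hs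
    exact (hF.analyticAt_of_mem hs).differentiableAt.hasDerivAt.comp s (hz s)
  · filter_upwards [hball] with s hs
    have hode := ordinaryHypergeometric_ode (a := a) (b := 1 - a) (c := 1) (z := -s / 4)
      (fun k ↦ (neg_one_lt_zero.trans_le k.cast_nonneg).ne') hs
    have hF'' := ((hasFPowerSeriesOnBall_deriv hF).analyticAt_of_mem hs).differentiableAt.hasDerivAt
    have hP : HasDerivAt (fun s : ℝ ↦ s * (4 + s)) (1 * (4 + s) + s * 1) s :=
      (hasDerivAt_id s).mul ((hasDerivAt_id s).const_add 4)
    refine (hP.mul ((hF''.comp s (hz s)).mul_const _)).congr_deriv ?_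
    simp only [Function.comp_apply]
    linear_combination -hode

end SturmLiouville

section ParametricIntegral

theorem hasDerivAt_intervalIntegral_of_continuousOn {𝕜 E : Type*} [RCLike 𝕜]
    [NormedAddCommGroup E] [NormedSpace ℝ E] [NormedSpace 𝕜 E] {F F' : 𝕜 → ℝ → E} {a b : ℝ}
    {x₀ : 𝕜} {U : Set 𝕜} (hU : U ∈ 𝓝 x₀) (hF : ∀ x ∈ U, ContinuousOn (F x) (uIcc a b))
    (hF' : ContinuousOn (Function.uncurry F') (U ×ˢ uIcc a b))
    (hderiv : ∀ x ∈ U, ∀ t ∈ uIcc a b, HasDerivAt (fun x ↦ F x t) (F' x t) x) :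
    HasDerivAt (fun x ↦ ∫ t in a..b, F x t) (∫ t in a..b, F' x₀ t) x₀ := by
  obtain ⟨K, hK_nhds, hKU, hK⟩ := local_compact_nhds hU
  obtain ⟨C, hC⟩ := (hK.prod isCompact_uIcc).exists_bound_of_continuousOn
    (hF'.mono (prod_mono_left hKU))
  have hF'x₀ : ContinuousOn (F' x₀) (uIcc a b) :=
    hF'.comp (f := fun t ↦ (x₀, t)) (by fun_prop) fun t ht ↦ ⟨mem_of_mem_nhds hU, ht⟩
  refine (intervalIntegral.hasDerivAt_integral_of_dominated_loc_of_deriv_le (bound := fun _ ↦ C)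
    hK_nhds ?_ (hF x₀ (mem_of_mem_nhds hU)).intervalIntegrable ?_ ?_ (by simp) ?_).2
  · filter_upwards [hU] with x hx
    exact ((hF x hx).mono uIoc_subset_uIcc).aestronglyMeasurable measurableSet_uIoc
  · exact (hF'x₀.mono uIoc_subset_uIcc).aestronglyMeasurable measurableSet_uIoc
  · exact .of_forall fun t ht x hx ↦ hC (x, t) ⟨hx, uIoc_subset_uIcc ht⟩
  · exact .of_forall fun t ht x hx ↦ hderiv x (hKU hx) t (uIoc_subset_uIcc ht)

theorem hasDerivAt_integral_mul_add_rpow {g ρ : ℝ → ℝ} {a b s : ℝ} (p : ℝ)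
    (hg : ContinuousOn g (uIcc a b)) (hρ : ContinuousOn ρ (uIcc a b))
    (hρ0 : ∀ t ∈ uIcc a b, 0 ≤ ρ t) (hs : 0 < s) :
    HasDerivAt (fun s ↦ ∫ t in a..b, g t * (ρ t + s) ^ p)
      (p * ∫ t in a..b, g t * (ρ t + s) ^ (p - 1)) s := by
  have hpos : ∀ x ∈ Ioi (0 : ℝ), ∀ t ∈ uIcc a b, 0 < ρ t + x := fun x hx t ht ↦
    add_pos_of_nonneg_of_pos (hρ0 t ht) hx
  rw [← intervalIntegral.integral_const_mul]
  refine hasDerivAt_intervalIntegral_of_continuousOn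
    (F' := fun s t ↦ p * (g t * (ρ t + s) ^ (p - 1))) (Ioi_mem_nhds hs) (fun x hx ↦ ?_) ?_
    fun x hx t ht ↦ ?_
  · exact hg.mul ((hρ.add continuousOn_const).rpow_const fun t ht ↦ .inl (hpos x hx t ht).ne')
  · have hsnd : MapsTo Prod.snd (Ioi (0 : ℝ) ×ˢ uIcc a b) (uIcc a b) := fun z hz ↦ hz.2
    refine continuousOn_const.mul ((hg.comp continuousOn_snd hsnd).mul
      (((hρ.comp continuousOn_snd hsnd).add continuousOn_fst).rpow_const
        fun z hz ↦ .inl (hpos z.1 hz.1 z.2 hz.2).ne'))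
  · refine ((((hasDerivAt_id x).const_add (ρ t)).rpow_const (p := p)
      (.inl (hpos x hx t ht).ne')).const_mul (g t)).congr_deriv ?_
    simp only [id_eq]
    ring

end ParametricIntegral

section ToroidalIntegral

/-- The toroidal (Legendre-type) integral `∫₀^π cos (n t) (2 (1 - cos t) + s) ^ p dt`. The profile
function is the case `n = 1`, `p = -1/2`. -/
noncomputable def toroidalIntegral (n : ℕ) (p s : ℝ) : ℝ :=
  ∫ t in 0..π, Real.cos (n * t) * (2 * (1 - Real.cos t) + s) ^ p

variable {s : ℝ}

theorem two_mul_one_sub_cos_nonneg (t : ℝ) : 0 ≤ 2 * (1 - Real.cos t) := by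
  linarith [Real.cos_le_one t]

theorem two_mul_one_sub_cos_add_pos (hs : 0 < s) (t : ℝ) : 0 < 2 * (1 - Real.cos t) + s :=
  add_pos_of_nonneg_of_pos (two_mul_one_sub_cos_nonneg t) hs

theorem Fprof_eq_toroidalIntegral (hs : 0 < s) : Fprof s = toroidalIntegral 1 (-1 / 2) s := by
  refine intervalIntegral.integral_congr fun t _ ↦ ?_
  have hR := two_mul_one_sub_cos_add_pos hs t
  simp only [Nat.cast_one, one_mul, div_eq_mul_inv, neg_mul, Real.rpow_neg hR.le,
    Real.sqrt_eq_rpow]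

theorem hasDerivAt_toroidalIntegral (n : ℕ) (p : ℝ) (hs : 0 < s) :
    HasDerivAt (toroidalIntegral n p) (p * toroidalIntegral n (p - 1) s) s :=
  hasDerivAt_integral_mul_add_rpow p (by fun_prop) (by fun_prop)
    (fun t _ ↦ two_mul_one_sub_cos_nonneg t) hs

theorem hasDerivAt_two_mul_one_sub_cos_add_rpow (p : ℝ) (hs : 0 < s) (t : ℝ) :
    HasDerivAt (fun t ↦ (2 * (1 - Real.cos t) + s) ^ p)
      (2 * p * (Real.sin t * (2 * (1 - Real.cos t) + s) ^ (p - 1))) t := by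
  have hR : HasDerivAt (fun t ↦ 2 * (1 - Real.cos t) + s) (2 * Real.sin t) t :=
    ((((Real.hasDerivAt_cos t).const_sub 1).const_mul 2).add_const s).congr_deriv (by ring)
  exact (hR.rpow_const (.inl (two_mul_one_sub_cos_add_pos hs t).ne')).congr_deriv (by ring)

theorem hasDerivAt_sin_mul_two_mul_one_sub_cos_add_rpow (p : ℝ) (hs : 0 < s) (t : ℝ) :
    HasDerivAt (fun t ↦ 2 * p * (Real.sin t * (2 * (1 - Real.cos t) + s) ^ (p - 1)))
      (-(s * (4 + s) * (p * (p - 1)) * (2 * (1 - Real.cos t) + s) ^ (p - 2) +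
        (1 - 2 * p) * (2 + s) * p * (2 * (1 - Real.cos t) + s) ^ (p - 1) +
        p ^ 2 * (2 * (1 - Real.cos t) + s) ^ p)) t := by
  refine (((Real.hasDerivAt_sin t).mul (hasDerivAt_two_mul_one_sub_cos_add_rpow (p - 1) hs t)
    ).const_mul (2 * p)).congr_deriv ?_
  have hR := two_mul_one_sub_cos_add_pos hs t
  set R := 2 * (1 - Real.cos t) + s with hR_def
  have hpow_one : R ^ (p - 1) = R ^ (p - 2) * R := by
    rw [← Real.rpow_add_one hR.ne']
    ring_nf
  have hpow : R ^ p = R ^ (p - 2) * R ^ 2 := by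
    rw [← Real.rpow_add_natCast hR.ne', Nat.cast_two, sub_add_cancel]
  have hcos : Real.cos t = 1 + (s - R) / 2 := by rw [hR_def]; ring
  have hsin : Real.sin t ^ 2 = 1 - (1 + (s - R) / 2) ^ 2 := by rw [← hcos, Real.sin_sq]
  rw [sub_sub, one_add_one_eq_two, hpow, hpow_one, hcos]
  linear_combination 4 * p * (p - 1) * R ^ (p - 2) * hsin

theorem integral_cos_mul_eq_of_hasDerivAt (n : ℕ) {v v' v'' : ℝ → ℝ}
    (hv : ∀ t ∈ uIcc 0 π, HasDerivAt v (v' t) t) (hv' : ∀ t ∈ uIcc 0 π, HasDerivAt v' (v'' t) t)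
    (hv'' : IntervalIntegrable v'' volume 0 π) (h0 : v' 0 = 0) (hπ : v' π = 0) :
    ∫ t in 0..π, Real.cos (n * t) * v'' t = -(n ^ 2 * ∫ t in 0..π, Real.cos (n * t) * v t) := by
  have hnt (t : ℝ) : HasDerivAt (fun t : ℝ ↦ n * t) n t := by
    simpa using (hasDerivAt_id t).const_mul (n : ℝ)
  have hprim : ∀ t ∈ uIcc 0 π, HasDerivAt
      (fun t ↦ Real.cos (n * t) * v' t + n * (Real.sin (n * t) * v t))
      (Real.cos (n * t) * v'' t + n ^ 2 * (Real.cos (n * t) * v t)) t := fun t ht ↦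
    (((hnt t).cos.mul (hv' t ht)).add (((hnt t).sin.mul (hv t ht)).const_mul (n : ℝ))).congr_deriv
      (by ring)
  have hint'' : IntervalIntegrable (fun t ↦ Real.cos (n * t) * v'' t) volume 0 π :=
    hv''.continuousOn_mul (by fun_prop)
  have hint : IntervalIntegrable (fun t ↦ n ^ 2 * (Real.cos (n * t) * v t)) volume 0 π :=
    ContinuousOn.intervalIntegrable <| continuousOn_const.mul <|
      ContinuousOn.mul (by fun_prop) fun t ht ↦ (hv t ht).continuousAt.continuousWithinAt
  have hFTC := intervalIntegral.integral_eq_sub_of_hasDerivAt hprim (hint''.add hint)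
  rw [intervalIntegral.integral_add hint'' hint, intervalIntegral.integral_const_mul] at hFTC
  simp only [h0, hπ, Real.sin_nat_mul_pi, mul_zero, Real.sin_zero, zero_mul, add_zero,
    sub_zero] at hFTC
  linarith

theorem toroidalIntegral_ode (n : ℕ) (p : ℝ) (hs : 0 < s) :
    s * (4 + s) * (p * (p - 1)) * toroidalIntegral n (p - 2) s +
      (1 - 2 * p) * (2 + s) * p * toroidalIntegral n (p - 1) s +
      p ^ 2 * toroidalIntegral n p s = n ^ 2 * toroidalIntegral n p s := by
  have hcont (q : ℝ) : Continuous fun t ↦ (2 * (1 - Real.cos t) + s) ^ q :=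
    Continuous.rpow_const (by fun_prop) fun t ↦ .inl (two_mul_one_sub_cos_add_pos hs t).ne'
  have hint (C q : ℝ) : IntervalIntegrable
      (fun t ↦ C * (Real.cos (n * t) * (2 * (1 - Real.cos t) + s) ^ q)) volume 0 π :=
    Continuous.intervalIntegrable (by fun_prop) 0 π
  have hparts := integral_cos_mul_eq_of_hasDerivAt n
    (fun t _ ↦ hasDerivAt_two_mul_one_sub_cos_add_rpow p hs t)
    (fun t _ ↦ hasDerivAt_sin_mul_two_mul_one_sub_cos_add_rpow p hs t)
    (Continuous.intervalIntegrable (by fun_prop) 0 π) (by simp) (by simp)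
  rw [← neg_eq_iff_eq_neg] at hparts
  unfold toroidalIntegral
  rw [← hparts]
  simp only [← intervalIntegral.integral_const_mul, ← intervalIntegral.integral_neg]
  rw [← intervalIntegral.integral_add (hint _ _) (hint _ _),
    ← intervalIntegral.integral_add ((hint _ _).add (hint _ _)) (hint _ _)]
  congr with t
  ring

theorem isSturmLiouvilleSolution_toroidalIntegral (n : ℕ) :
    IsSturmLiouvilleSolution (𝓝[>] 0) (fun s ↦ s * (4 + s)) (fun _ ↦ (n : ℝ) ^ 2 - 1 / 4)
      (toroidalIntegral n (-1 / 2)) := by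
  refine ⟨fun s ↦ -1 / 2 * toroidalIntegral n (-1 / 2 - 1) s, ?_, ?_⟩
  · filter_upwards [self_mem_nhdsWithin] with s hs
    exact hasDerivAt_toroidalIntegral n _ hs
  · filter_upwards [self_mem_nhdsWithin] with s hs
    have hP : HasDerivAt (fun s : ℝ ↦ s * (4 + s)) (1 * (4 + s) + s * 1) s :=
      (hasDerivAt_id s).mul ((hasDerivAt_id s).const_add 4)
    have hf' := (hasDerivAt_toroidalIntegral n (-1 / 2 - 1) hs).const_mul (-1 / 2)
    refine (hP.mul hf').congr_deriv ?_
    rw [sub_sub, one_add_one_eq_two]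
    linear_combination toroidalIntegral_ode n (-1 / 2) hs

theorem isLogAnalytic_toroidalIntegral (n : ℕ) : IsLogAnalytic (toroidalIntegral n (-1 / 2)) := by
  have hF := (hasFPowerSeriesOnBall_ordinaryHypergeometric (1 / 2 - n : ℝ) (1 - (1 / 2 - n))
    1).analyticAt
  have hu := (isSturmLiouvilleSolution_ordinaryHypergeometric (1 / 2 - n)).mono
    (nhdsWithin_le_nhds (s := Ioi 0))
  have hq : (1 / 2 - n : ℝ) * (1 / 2 - n - 1) = n ^ 2 - 1 / 4 := by ring
  rw [hq] at hu
  exact (isSturmLiouvilleSolution_toroidalIntegral n).isLogAnalytic hu (w := fun s ↦ 4 + s)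
    (by fun_prop) (by norm_num) (hF.comp_of_eq (by fun_prop) (by norm_num)) (by simp)

end ToroidalIntegral

section Asymptotics

variable {a b s : ℝ}

theorem tendsto_integral_mul_div_sqrt_sq_add {g h : ℝ → ℝ} (hg : IntervalIntegrable g volume a b)
    (hh : AEStronglyMeasurable h (volume.restrict (uIoc a b))) (hpos : ∀ t ∈ uIoc a b, 0 < h t) :
    Tendsto (fun s ↦ ∫ t in a..b, g t * (h t / √(h t ^ 2 + s))) (𝓝[>] 0)
      (𝓝 (∫ t in a..b, g t)) := by
  refine intervalIntegral.tendsto_integral_filter_of_dominated_convergence (fun t ↦ ‖g t‖) ?_ ?_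
    hg.norm (.of_forall fun t ht ↦ ?_)
  · filter_upwards [self_mem_nhdsWithin] with s (hs : 0 < s)
    have hφ : Continuous fun x : ℝ ↦ x / √(x ^ 2 + s) :=
      continuous_id.div (by fun_prop) fun x ↦ (Real.sqrt_pos.2 (by positivity)).ne'
    exact hg.def'.aestronglyMeasurable.mul (hφ.comp_aestronglyMeasurable hh)
  · filter_upwards [self_mem_nhdsWithin] with s (hs : 0 < s)
    refine .of_forall fun t _ ↦ ?_
    have hle : ‖h t / √(h t ^ 2 + s)‖ ≤ 1 := by
      rw [norm_div, Real.norm_of_nonneg (Real.sqrt_nonneg _), Real.norm_eq_abs]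
      exact div_le_one_of_le₀ (Real.abs_le_sqrt (by linarith)) (Real.sqrt_nonneg _)
    rw [norm_mul]
    exact mul_le_of_le_one_right (norm_nonneg _) hle
  · have hcont : ContinuousAt (fun s ↦ g t * (h t / √(h t ^ 2 + s))) 0 := by
      have := hpos t ht
      fun_prop (disch := positivity)
    have hlim := hcont.tendsto.mono_left (nhdsWithin_le_nhds (s := Ioi 0))
    simpa [Real.sqrt_sq (hpos t ht).le, (hpos t ht).ne'] using hlim

theorem hasDerivAt_arsinh_div_sqrt (hs : 0 < s) (x : ℝ) :
    HasDerivAt (fun x ↦ Real.arsinh (x / √s)) (√(x ^ 2 + s))⁻¹ x := by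
  refine ((hasDerivAt_id x).div_const √s).arsinh.congr_deriv ?_
  rw [smul_eq_mul, id_eq, one_div, ← mul_inv, ← Real.sqrt_mul (by positivity), div_pow,
    Real.sq_sqrt hs.le]
  congr 2
  field_simp
  ring

theorem integral_deriv_div_sqrt_sq_add {h h' : ℝ → ℝ} (hs : 0 < s)
    (hh : ∀ t ∈ uIcc a b, HasDerivAt h (h' t) t) (hh' : IntervalIntegrable h' volume a b) :
    ∫ t in a..b, h' t / √(h t ^ 2 + s) = Real.arsinh (h b / √s) - Real.arsinh (h a / √s) := by
  have hcont : ContinuousOn h (uIcc a b) := fun t ht ↦ (hh t ht).continuousAt.continuousWithinAt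
  refine intervalIntegral.integral_eq_sub_of_hasDerivAt (f := fun t ↦ Real.arsinh (h t / √s))
    (fun t ht ↦ ?_) ?_
  · exact ((hasDerivAt_arsinh_div_sqrt hs (h t)).comp t (hh t ht)).congr_deriv
      (inv_mul_eq_div _ _)
  · simp only [div_eq_mul_inv]
    refine hh'.mul_continuousOn (ContinuousOn.inv₀ (by fun_prop) fun t _ ↦ ?_)
    exact (Real.sqrt_pos.2 (by positivity)).ne'

theorem arsinh_div_sqrt (c : ℝ) (hs : 0 < s) :
    Real.arsinh (c / √s) = Real.log (c + √(c ^ 2 + s)) - 1 / 2 * Real.log s := by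
  have hsqrt : √(1 + (c / √s) ^ 2) = √(c ^ 2 + s) / √s := by
    rw [← Real.sqrt_div (by positivity), div_pow, Real.sq_sqrt hs.le]
    congr 1
    field_simp
    ring
  have hpos : 0 < c + √(c ^ 2 + s) :=
    neg_lt_iff_pos_add'.1 (Real.lt_sqrt_of_sq_lt (by linarith [neg_sq c]))
  rw [Real.arsinh, hsqrt, ← add_div, Real.log_div hpos.ne' (Real.sqrt_pos.2 hs).ne',
    Real.log_sqrt hs.le]
  ring

theorem tendsto_arsinh_div_sqrt_add_half_log {c : ℝ} (hc : 0 < c) :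
    Tendsto (fun s ↦ Real.arsinh (c / √s) + 1 / 2 * Real.log s) (𝓝[>] 0)
      (𝓝 (Real.log (2 * c))) := by
  have hcont : ContinuousAt (fun s ↦ Real.log (c + √(c ^ 2 + s))) 0 := by
    fun_prop (disch := positivity)
  have hlim := hcont.tendsto.mono_left (nhdsWithin_le_nhds (s := Ioi 0))
  rw [add_zero, Real.sqrt_sq hc.le, ← two_mul] at hlim
  refine hlim.congr' ?_
  filter_upwards [self_mem_nhdsWithin] with s hs
  rw [arsinh_div_sqrt c hs, sub_add_cancel]

theorem two_mul_one_sub_cos_eq_sq (t : ℝ) : 2 * (1 - Real.cos t) = (2 * Real.sin (t / 2)) ^ 2 := by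
  rw [mul_pow, Real.sin_sq_eq_half_sub, mul_div_cancel₀ t two_ne_zero]
  ring

theorem cos_eq_cos_half_add {t : ℝ} (ht : Real.cos (t / 4) ≠ 0) :
    Real.cos t = Real.cos (t / 2) +
      (1 / 2 * Real.tan (t / 4) - Real.sin (t / 2)) * (2 * Real.sin (t / 2)) := by
  have hcos : Real.cos t = 1 - (2 * Real.sin (t / 2)) ^ 2 / 2 := by
    rw [← two_mul_one_sub_cos_eq_sq]
    ring
  have hcos_half : Real.cos (t / 2) = 2 * Real.cos (t / 4) ^ 2 - 1 := by
    rw [← Real.cos_two_mul]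
    ring_nf
  have hsin_half : Real.sin (t / 2) = 2 * Real.sin (t / 4) * Real.cos (t / 4) := by
    rw [← Real.sin_two_mul]
    ring_nf
  have htan : Real.tan (t / 4) * Real.sin (t / 2) = 1 - Real.cos (t / 2) := by
    rw [Real.tan_eq_sin_div_cos, hsin_half, hcos_half]
    field_simp
    linear_combination 2 * Real.sin_sq_add_cos_sq (t / 4)
  linear_combination hcos - htan

theorem cos_div_four_pos {t : ℝ} (ht : t ∈ uIcc 0 π) : 0 < Real.cos (t / 4) := by
  rw [uIcc_of_le Real.pi_pos.le] at ht
  exact Real.cos_pos_of_mem_Ioo ⟨by linarith [ht.1, Real.pi_pos], by linarith [ht.2, Real.pi_pos]⟩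

theorem continuousOn_half_tan_sub_sin :
    ContinuousOn (fun t ↦ 1 / 2 * Real.tan (t / 4) - Real.sin (t / 2)) (uIcc 0 π) := by
  have htan : ContinuousOn (fun t ↦ Real.tan (t / 4)) (uIcc 0 π) := fun t ht ↦
    ((Real.continuousAt_tan.2 (cos_div_four_pos ht).ne').comp
      (f := fun t ↦ t / 4) (by fun_prop)).continuousWithinAt
  fun_prop

theorem integral_half_tan_sub_sin :
    ∫ t in 0..π, (1 / 2 * Real.tan (t / 4) - Real.sin (t / 2)) = Real.log 2 - 2 := by
  have hprim : ∀ t ∈ uIcc 0 π, HasDerivAt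
      (fun t ↦ 2 * Real.cos (t / 2) - 2 * Real.log (Real.cos (t / 4)))
      (1 / 2 * Real.tan (t / 4) - Real.sin (t / 2)) t := fun t ht ↦ by
    have hquarter : HasDerivAt (fun t : ℝ ↦ t / 4) (1 / 4) t := (hasDerivAt_id t).div_const 4
    have hhalf : HasDerivAt (fun t : ℝ ↦ t / 2) (1 / 2) t := (hasDerivAt_id t).div_const 2
    refine ((hhalf.cos.const_mul 2).sub
      ((hquarter.cos.log (cos_div_four_pos ht).ne').const_mul 2)).congr_deriv ?_
    rw [Real.tan_eq_sin_div_cos]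
    ring
  have hlog : Real.log (Real.cos (π / 4)) = -(1 / 2) * Real.log 2 := by
    rw [Real.cos_pi_div_four, Real.log_div (by positivity) two_ne_zero, Real.log_sqrt zero_le_two]
    ring
  rw [intervalIntegral.integral_eq_sub_of_hasDerivAt hprim
    continuousOn_half_tan_sub_sin.intervalIntegrable, hlog]
  simp only [Real.cos_pi_div_two, zero_div, Real.cos_zero, Real.log_one]
  ring

theorem Fprof_eq_arsinh_add_integral (hs : 0 < s) :
    Fprof s = Real.arsinh (2 / √s) +
      ∫ t in 0..π, (1 / 2 * Real.tan (t / 4) - Real.sin (t / 2)) *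
        (2 * Real.sin (t / 2) / √((2 * Real.sin (t / 2)) ^ 2 + s)) := by
  have hsqrt (t : ℝ) : √((2 * Real.sin (t / 2)) ^ 2 + s) ≠ 0 :=
    (Real.sqrt_pos.2 (by positivity)).ne'
  have hderiv (t : ℝ) : HasDerivAt (fun t ↦ 2 * Real.sin (t / 2)) (Real.cos (t / 2)) t :=
    ((((hasDerivAt_id t).div_const 2).sin).const_mul 2).congr_deriv (by simp only [id_eq]; ring)
  have hmain : ∫ t in 0..π, Real.cos (t / 2) / √((2 * Real.sin (t / 2)) ^ 2 + s) =
      Real.arsinh (2 / √s) := by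
    rw [integral_deriv_div_sqrt_sq_add hs (fun t _ ↦ hderiv t)
      (Continuous.intervalIntegrable (by fun_prop) 0 π)]
    simp
  have hint_main : IntervalIntegrable
      (fun t ↦ Real.cos (t / 2) / √((2 * Real.sin (t / 2)) ^ 2 + s)) volume 0 π :=
    Continuous.intervalIntegrable (by fun_prop (disch := exact hsqrt)) 0 π
  have hint_rest : IntervalIntegrable
      (fun t ↦ (1 / 2 * Real.tan (t / 4) - Real.sin (t / 2)) *
        (2 * Real.sin (t / 2) / √((2 * Real.sin (t / 2)) ^ 2 + s))) volume 0 π :=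
    (continuousOn_half_tan_sub_sin.mul <| Continuous.continuousOn <| by
      fun_prop (disch := exact hsqrt)).intervalIntegrable
  rw [← hmain, ← intervalIntegral.integral_add hint_main hint_rest]
  refine intervalIntegral.integral_congr fun t ht ↦ ?_
  rw [two_mul_one_sub_cos_eq_sq, cos_eq_cos_half_add (cos_div_four_pos ht).ne', add_div,
    mul_div_assoc]

theorem tendsto_Fprof_add_half_log :
    Tendsto (fun s ↦ Fprof s + 1 / 2 * Real.log s) (𝓝[>] 0) (𝓝 (Real.log 8 - 2)) := by
  have hpos : ∀ t ∈ uIoc 0 π, 0 < 2 * Real.sin (t / 2) := fun t ht ↦ by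
    rw [uIoc_of_le Real.pi_pos.le] at ht
    have := Real.sin_pos_of_pos_of_lt_pi (half_pos ht.1) (by linarith [ht.2, Real.pi_pos])
    positivity
  have hrest := tendsto_integral_mul_div_sqrt_sq_add
    continuousOn_half_tan_sub_sin.intervalIntegrable (by fun_prop) hpos
  rw [integral_half_tan_sub_sin] at hrest
  have hlim := (tendsto_arsinh_div_sqrt_add_half_log two_pos).add hrest
  have hlog : Real.log (2 * 2) + (Real.log 2 - 2) = Real.log 8 - 2 := by
    rw [← add_sub_assoc, ← Real.log_mul (by norm_num) (by norm_num)]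
    norm_num
  rw [hlog] at hlim
  refine hlim.congr' ?_
  filter_upwards [self_mem_nhdsWithin] with s hs
  rw [Fprof_eq_arsinh_add_integral hs]
  ring

end Asymptotics

theorem isLogAnalytic_Fprof : IsLogAnalytic Fprof :=
  (isLogAnalytic_toroidalIntegral 1).congr <| by
    filter_upwards [self_mem_nhdsWithin] with s hs
    exact (Fprof_eq_toroidalIntegral hs).symm

/-- `F` admits a convergent log-analytic expansion at `s = 0`:
there are `r > 0` and coefficients `(a_j)_{j≥1}`, `(b_j)_{j≥1}` whose power series
converge absolutely on `(0,r)`, such that for `s ∈ (0,r)`,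
`F(s) = −(1/2) log s + log 8 − 2 + ∑_{j≥1} (a_j s^j + b_j s^j log s)`. -/
theorem stmt11 :
    ∃ (r : ℝ) (a b : ℕ → ℝ), 0 < r ∧
      (∀ s ∈ Set.Ioo (0 : ℝ) r,
        Summable (fun j : ℕ => |a (j + 1) * s ^ (j + 1)|) ∧
        Summable (fun j : ℕ => |b (j + 1) * s ^ (j + 1)|)) ∧
      ∀ s ∈ Set.Ioo (0 : ℝ) r,
        Fprof s = -(1 / 2) * Real.log s + Real.log 8 - 2 +
          ∑' j : ℕ, (a (j + 1) * s ^ (j + 1) + b (j + 1) * s ^ (j + 1) * Real.log s) := by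
  obtain ⟨r, a, b, hr, ha0, hb0, hexp⟩ := isLogAnalytic_Fprof.exists_hasSum (β := -(1 / 2))
    (by simpa using tendsto_Fprof_add_half_log)
  refine ⟨r, a, b, hr, fun s hs ↦ ?_, fun s hs ↦ ?_⟩
  · obtain ⟨ha, hb, -⟩ := hexp s hs
    exact ⟨((summable_nat_add_iff 1).2 ha).abs, ((summable_nat_add_iff 1).2 hb).abs⟩
  · obtain ⟨-, -, hsum⟩ := hexp s hs
    rw [((hasSum_nat_add_iff' 1).2 hsum).tsum_eq, Finset.sum_range_one, ha0, hb0]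
    ring
end

section
/- Fix R > 0 and Z ∈ ℝ. There exist constants C > 0 and ρ₀ ∈ (0, R) such that the following holds for every ρ ∈ (0, ρ₀): if B = B_ρ((R,Z)) ⊂ ℝ² and φ ∈ C²(B) ∩ C¹(closure of B) satisfies div(x₁ ∇φ) = 0 in B and n·∇φ = n·e₁ − ρ/(2R) on ∂B (n the outward unit normal), then |∫_B x₁ |∇φ(x)|² dx − π R ρ²| ≤ C ρ³. -/
open MeasureTheory

/-- The center `(R,Z)` as a point of the Euclidean plane. -/
noncomputable def ctr (R Z : ℝ) : EuclideanSpace ℝ (Fin 2) :=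
  (EuclideanSpace.equiv (Fin 2) ℝ).symm ![R, Z]

/-!
Write `a x = ⟪e, x⟫` for the weight, `R = ⟪e, c⟫` for its value at the centre and `d` for the
dimension. The potential `ψ x = ⟪e, x - c⟫ - ‖x - c‖ ^ 2 / (2 d R)` has exactly the prescribed
normal derivative, and the divergence of `a ∇ψ` is the small defect `-(1 + 1 / d) ⟪e, x - c⟫ / R`.
This defect is minus the divergence of a field `H` along `e` of size `ρ ^ 2 / R` that vanishes on
the sphere, so testing the equation of `u = φ - ψ` against `u` gives
`∫ a ‖∇u‖ ^ 2 ≤ ∫ ‖H‖ ^ 2 / a` with no Poincaré or trace inequality. Since `∇ψ = e + O(ρ / R)` and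
`a = R + O(ρ)` on the ball, the energy of `φ` is `R` times the volume of the ball up to a relative
error `O(ρ / R)`.

The boundary enters only through fields tangent to the sphere, for which the divergence theorem
follows from integration by parts against radial cutoffs, without any surface measure.
-/

open Filter Topology Metric Module InnerProductSpace Gradient

section Divergence

variable {E : Type*} [NormedAddCommGroup E] [NormedSpace ℝ E]

/-- The divergence of a vector field, as the trace of its Fréchet derivative. It needs neither
coordinates nor an inner product; it is the junk value `0` where the field is not differentiable. -/
noncomputable def divergence (V : E → E) (x : E) : ℝ :=
  LinearMap.trace ℝ E (fderiv ℝ V x)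

variable {V W : E → E} {f : E → ℝ} {U : Set E} {x : E}

lemma divergence_congr (h : V =ᶠ[𝓝 x] W) : divergence V x = divergence W x := by
  rw [divergence, divergence, h.fderiv_eq]

lemma divergence_const (v : E) : divergence (fun _ : E => v) x = 0 := by
  simp [divergence]

lemma divergence_sub (hV : DifferentiableAt ℝ V x) (hW : DifferentiableAt ℝ W x) :
    divergence (fun y => V y - W y) x = divergence V x - divergence W x := by
  simp [divergence, fderiv_fun_sub hV hW]

variable [FiniteDimensional ℝ E]

lemma divergence_sub_const (c : E) : divergence (fun y : E => y - c) x = finrank ℝ E := by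
  simp [divergence, fderiv_sub_const]

lemma divergence_smul (hf : DifferentiableAt ℝ f x) (hV : DifferentiableAt ℝ V x) :
    divergence (fun y => f y • V y) x = f x * divergence V x + fderiv ℝ f x (V x) := by
  simp [divergence, fderiv_fun_smul hf hV]

lemma continuousOn_divergence (hV : ContDiffOn ℝ 1 V U) (hU : IsOpen U) :
    ContinuousOn (divergence V) U :=
  ((LinearMap.trace ℝ E).comp (ContinuousLinearMap.coeLM ℝ)).continuous_of_finiteDimensional
    |>.comp_continuousOn (hV.continuousOn_fderiv_of_isOpen hU le_rfl)

variable [MeasurableSpace E] [BorelSpace E] {μ : Measure E} [μ.IsAddHaarMeasure]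

lemma integral_fderiv_eq_zero_of_hasCompactSupport {F : Type*} [NormedAddCommGroup F]
    [NormedSpace ℝ F] {g : E → F} (hg : ContDiff ℝ 1 g) (hg_supp : HasCompactSupport g) :
    ∫ x, fderiv ℝ g x ∂μ = 0 := by
  have h_int : Integrable (fderiv ℝ g) μ :=
    (hg.continuous_fderiv one_ne_zero).integrable_of_hasCompactSupport (hg_supp.fderiv ℝ)
  ext v
  rw [ContinuousLinearMap.integral_apply h_int]
  simpa using integral_smul_fderiv_eq_neg_fderiv_smul_of_integrable (μ := μ)
    (f := fun _ => (1 : ℝ)) (g := g) (v := v) (by simp)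
    (by simpa using h_int.apply_continuousLinearMap v)
    (by simpa using hg.continuous.integrable_of_hasCompactSupport hg_supp)
    (fun x _ => differentiableAt_const _) (fun x _ => hg.differentiable one_ne_zero x)

lemma integral_divergence_eq_zero_of_hasCompactSupport (hV : ContDiff ℝ 1 V)
    (hV_supp : HasCompactSupport V) : ∫ x, divergence V x ∂μ = 0 := by
  let T : (E →L[ℝ] E) →L[ℝ] ℝ :=
    ((LinearMap.trace ℝ E).comp (ContinuousLinearMap.coeLM ℝ)).toContinuousLinearMap
  have h_int : Integrable (fderiv ℝ V) μ :=
    (hV.continuous_fderiv one_ne_zero).integrable_of_hasCompactSupport (hV_supp.fderiv ℝ)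
  calc ∫ x, divergence V x ∂μ = T (∫ x, fderiv ℝ V x ∂μ) := T.integral_comp_comm h_int
    _ = 0 := by rw [integral_fderiv_eq_zero_of_hasCompactSupport hV hV_supp, map_zero]

lemma setIntegral_mul_divergence_of_tsupport_subset (hU : IsOpen U) (hf : ContDiff ℝ 1 f)
    (hf_supp : HasCompactSupport f) (hfU : tsupport f ⊆ U) (hV : ContDiffOn ℝ 1 V U) :
    ∫ x in U, f x * divergence V x ∂μ = -∫ x in U, fderiv ℝ f x (V x) ∂μ := by
  have h_smul : ContDiff ℝ 1 (fun x => f x • V x) := contDiff_iff_contDiffAt.2 fun x => by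
    by_cases hx : x ∈ tsupport f
    · exact hf.contDiffAt.smul (hV.contDiffAt (hU.mem_nhds (hfU hx)))
    · refine (contDiffAt_const (c := (0 : E))).congr_of_eventuallyEq ?_
      filter_upwards [(notMem_tsupport_iff_eventuallyEq.1 hx)] with y hy
      simp [hy]
  have h_integrableOn {g : E → ℝ} (hg : ContinuousOn g U) (hg_supp : ∀ x ∉ tsupport f, g x = 0) :
      IntegrableOn g U μ :=
    ((integrableOn_iff_integrable_of_support_subset
      fun x => not_imp_comm.1 (hg_supp x)).1
        ((hg.mono hfU).integrableOn_compact hf_supp)).integrableOn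
  have h_left : IntegrableOn (fun x => f x * divergence V x) U μ :=
    h_integrableOn (hf.continuous.continuousOn.mul (continuousOn_divergence hV hU))
      fun x hx => by simp [image_eq_zero_of_notMem_tsupport hx]
  have h_right : IntegrableOn (fun x => fderiv ℝ f x (V x)) U μ :=
    h_integrableOn ((hf.continuous_fderiv one_ne_zero).continuousOn.clm_apply hV.continuousOn)
      fun x hx => by simp [image_eq_zero_of_notMem_tsupport (mt (tsupport_fderiv_subset ℝ ·) hx)]
  rw [eq_neg_iff_add_eq_zero, ← integral_add h_left h_right]
  calc ∫ x in U, f x * divergence V x + fderiv ℝ f x (V x) ∂μ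
      = ∫ x in U, divergence (fun y => f y • V y) x ∂μ :=
        setIntegral_congr_fun hU.measurableSet fun x hx => (divergence_smul
          (hf.differentiable one_ne_zero x)
          ((hV.contDiffAt (hU.mem_nhds hx)).differentiableAt one_ne_zero)).symm
    _ = ∫ x, divergence (fun y => f y • V y) x ∂μ :=
        setIntegral_eq_integral_of_forall_compl_eq_zero fun x hx => by
          rw [divergence_congr (W := fun _ => 0), divergence_const]
          filter_upwards [notMem_tsupport_iff_eventuallyEq.1 (mt (hfU ·) hx)] with y hy
          simp [hy]
    _ = 0 := integral_divergence_eq_zero_of_hasCompactSupport h_smul hf_supp.smul_right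

end Divergence

section BallCutoff

variable {E : Type*} [NormedAddCommGroup E] {c x v : E} {ρ k : ℝ}

/-- The radial cutoff of steepness `k` for the ball of centre `c` and radius `ρ`: it is `1` where
`ρ ^ 2 - ‖x - c‖ ^ 2 ≥ 2 / k` and vanishes where this quantity is at most `1 / k`, so its support
stays away from the sphere. -/
noncomputable def ballCutoff (c : E) (ρ k : ℝ) (x : E) : ℝ :=
  Real.smoothTransition (k * (ρ ^ 2 - ‖x - c‖ ^ 2) - 1)

lemma ballCutoff_eq_one (h : 2 ≤ k * (ρ ^ 2 - ‖x - c‖ ^ 2)) : ballCutoff c ρ k x = 1 :=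
  Real.smoothTransition.one_of_one_le (by linarith)

lemma norm_ballCutoff_le_one : ‖ballCutoff c ρ k x‖ ≤ 1 := by
  rw [ballCutoff, Real.norm_of_nonneg (Real.smoothTransition.nonneg _)]
  exact Real.smoothTransition.le_one _

lemma tendsto_ballCutoff (hx : x ∈ ball c ρ) :
    Tendsto (fun k => ballCutoff c ρ k x) atTop (𝓝 1) := by
  have h_pos : 0 < ρ ^ 2 - ‖x - c‖ ^ 2 :=
    sub_pos.2 (pow_lt_pow_left₀ (mem_ball_iff_norm.1 hx) (norm_nonneg _) two_ne_zero)
  refine tendsto_const_nhds.congr' ?_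
  filter_upwards [(tendsto_id.atTop_mul_const h_pos).eventually_ge_atTop 2] with k hk
  exact (ballCutoff_eq_one hk).symm

lemma tsupport_ballCutoff_subset (hρ : 0 ≤ ρ) (hk : 0 < k) :
    tsupport (ballCutoff c ρ k) ⊆ ball c ρ := by
  have h_closed : IsClosed {x : E | 1 ≤ k * (ρ ^ 2 - ‖x - c‖ ^ 2)} :=
    isClosed_le continuous_const (by fun_prop)
  refine (closure_minimal (fun x hx => ?_) h_closed).trans fun x hx => ?_
  · by_contra h_lt
    exact hx (Real.smoothTransition.zero_of_nonpos (sub_nonpos.2 (not_le.1 h_lt).le))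
  · have h_pos : 0 < ρ ^ 2 - ‖x - c‖ ^ 2 :=
      pos_of_mul_pos_right (zero_lt_one.trans_le hx) hk.le
    exact mem_ball_iff_norm.2 (lt_of_pow_lt_pow_left₀ 2 hρ (sub_pos.1 h_pos))

variable [InnerProductSpace ℝ E]

lemma contDiff_ballCutoff : ContDiff ℝ 1 (ballCutoff c ρ k) :=
  Real.smoothTransition.contDiff.comp <|
    (contDiff_const.mul (contDiff_const.sub ((contDiff_id.sub contDiff_const).norm_sq ℝ))).sub
      contDiff_const

lemma fderiv_ballCutoff_apply : fderiv ℝ (ballCutoff c ρ k) x v =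
    -(2 * k * deriv Real.smoothTransition (k * (ρ ^ 2 - ‖x - c‖ ^ 2) - 1) * ⟪x - c, v⟫_ℝ) := by
  have h_outer := (Real.smoothTransition.contDiff.differentiable one_ne_zero
    (k * (ρ ^ 2 - ‖x - c‖ ^ 2) - 1)).hasDerivAt
  have h_inner : HasFDerivAt (fun y => k * (ρ ^ 2 - ‖y - c‖ ^ 2) - 1) _ x :=
    ((((hasFDerivAt_id x).sub_const c).norm_sq.const_sub (ρ ^ 2)).const_mul k).sub_const 1
  rw [show ballCutoff c ρ k = Real.smoothTransition ∘ fun y => k * (ρ ^ 2 - ‖y - c‖ ^ 2) - 1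
    from rfl, (h_outer.comp_hasFDerivAt x h_inner).fderiv]
  simp only [smul_apply, neg_apply, ContinuousLinearMap.comp_id, innerSL_apply_apply, id_eq,
    smul_eq_mul, nsmul_eq_mul]
  ring

lemma abs_fderiv_ballCutoff_le {ε : ℝ} (hk : 0 ≤ k) (hv : |⟪v, x - c⟫_ℝ| ≤ ε * ‖x - c‖ ^ 2) :
    |fderiv ℝ (ballCutoff c ρ k) x v| ≤ ε * -fderiv ℝ (ballCutoff c ρ k) x (x - c) := by
  have h_slope : 0 ≤ 2 * k * deriv Real.smoothTransition (k * (ρ ^ 2 - ‖x - c‖ ^ 2) - 1) :=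
    mul_nonneg (by positivity) Real.smoothTransition.monotone.deriv_nonneg
  rw [fderiv_ballCutoff_apply, fderiv_ballCutoff_apply, abs_neg, neg_neg, abs_mul,
    abs_of_nonneg h_slope, real_inner_comm, real_inner_self_eq_norm_sq, mul_left_comm]
  exact mul_le_mul_of_nonneg_left hv h_slope

lemma fderiv_ballCutoff_eq_zero (h : 2 < k * (ρ ^ 2 - ‖x - c‖ ^ 2)) :
    fderiv ℝ (ballCutoff c ρ k) x = 0 := by
  have h_open : IsOpen {y : E | 2 < k * (ρ ^ 2 - ‖y - c‖ ^ 2)} :=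
    isOpen_lt continuous_const (by fun_prop)
  have h_const : ballCutoff c ρ k =ᶠ[𝓝 x] fun _ => 1 := by
    filter_upwards [h_open.mem_nhds h] with y hy using ballCutoff_eq_one (le_of_lt hy)
  rw [h_const.fderiv_eq, fderiv_const_apply]

end BallCutoff

section TangentialField

variable {E : Type*} [NormedAddCommGroup E] [InnerProductSpace ℝ E] [FiniteDimensional ℝ E]
  {V : E → E} {c : E} {ρ k : ℝ}

lemma exists_abs_inner_le_mul_norm_sq {ε : ℝ} (hρ : 0 < ρ) (hε : 0 < ε)
    (hV : ContinuousOn V (closedBall c ρ)) (hV_tangent : ∀ x ∈ sphere c ρ, ⟪V x, x - c⟫_ℝ = 0) :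
    ∃ δ > 0, ∀ x ∈ ball c ρ, ρ ^ 2 - ‖x - c‖ ^ 2 < δ → |⟪V x, x - c⟫_ℝ| ≤ ε * ‖x - c‖ ^ 2 := by
  let S : Set E := {x ∈ closedBall c ρ | ε * ‖x - c‖ ^ 2 ≤ |⟪V x, x - c⟫_ℝ|}
  have hS : IsCompact S := by
    refine (isCompact_closedBall c ρ).of_isClosed_subset ?_ (Set.sep_subset _ _)
    exact isClosed_closedBall.isClosed_le (by fun_prop) (hV.inner (by fun_prop)).abs
  have hS_interior : ∀ x ∈ S, 0 < ρ ^ 2 - ‖x - c‖ ^ 2 := by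
    rintro x ⟨hx, hx_radial⟩
    refine sub_pos.2 (pow_lt_pow_left₀ ((mem_closedBall_iff_norm.1 hx).lt_of_ne fun h_sphere => ?_)
      (norm_nonneg _) two_ne_zero)
    rw [hV_tangent x (mem_sphere_iff_norm.2 h_sphere), h_sphere, abs_zero] at hx_radial
    exact absurd hx_radial (not_le.2 (by positivity))
  obtain ⟨δ, hδ, hδS⟩ := hS.exists_forall_le' (by fun_prop) hS_interior
  refine ⟨δ, hδ, fun x hx hx_lt => ?_⟩
  by_contra! h_radial
  exact absurd (hδS x ⟨ball_subset_closedBall hx, h_radial.le⟩) (not_le.2 hx_lt)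

variable [MeasurableSpace E] [BorelSpace E] {μ : Measure E} [μ.IsAddHaarMeasure]

lemma integrableOn_ball_of_continuousOn_closedBall {f : E → ℝ}
    (hf : ContinuousOn f (closedBall c ρ)) : IntegrableOn f (ball c ρ) μ :=
  (hf.integrableOn_compact (isCompact_closedBall c ρ)).mono_set ball_subset_closedBall

lemma setIntegral_ballCutoff_mul_divergence (hρ : 0 ≤ ρ) (hk : 0 < k)
    (hV : ContDiffOn ℝ 1 V (ball c ρ)) :
    ∫ x in ball c ρ, ballCutoff c ρ k x * divergence V x ∂μ =
      -∫ x in ball c ρ, fderiv ℝ (ballCutoff c ρ k) x (V x) ∂μ :=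
  have h_supp := tsupport_ballCutoff_subset (c := c) hρ hk
  setIntegral_mul_divergence_of_tsupport_subset isOpen_ball contDiff_ballCutoff
    ((isCompact_closedBall c ρ).of_isClosed_subset (isClosed_tsupport _)
      (h_supp.trans ball_subset_closedBall)) h_supp hV

lemma integrableOn_fderiv_ballCutoff_apply (hV : ContinuousOn V (closedBall c ρ)) :
    IntegrableOn (fun x => fderiv ℝ (ballCutoff c ρ k) x (V x)) (ball c ρ) μ :=
  integrableOn_ball_of_continuousOn_closedBall
    ((contDiff_ballCutoff.continuous_fderiv one_ne_zero).continuousOn.clm_apply hV)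

-- Testing the integration by parts on `y - c` bounds the radial mass of the cutoff's gradient
-- uniformly in its steepness, without computing the volume of a spherical shell.
lemma setIntegral_neg_fderiv_ballCutoff_le (hρ : 0 ≤ ρ) (hk : 0 < k) :
    ∫ x in ball c ρ, -fderiv ℝ (ballCutoff c ρ k) x (x - c) ∂μ ≤
      finrank ℝ E * μ.real (ball c ρ) := by
  have h_parts := setIntegral_ballCutoff_mul_divergence (μ := μ) (c := c) (V := fun y => y - c)
    hρ hk (contDiff_id.sub contDiff_const).contDiffOn
  simp only [divergence_sub_const] at h_parts
  rw [integral_neg, ← h_parts, integral_mul_const, mul_comm]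
  refine mul_le_mul_of_nonneg_left ((le_abs_self _).trans ?_) (Nat.cast_nonneg _)
  simpa using norm_setIntegral_le_of_norm_le_const (μ := μ) (measure_ball_lt_top (x := c) (r := ρ))
    fun x _ => norm_ballCutoff_le_one (c := c) (ρ := ρ) (k := k) (x := x)

lemma eventually_abs_setIntegral_ballCutoff_mul_divergence_le {ε : ℝ} (hρ : 0 < ρ) (hε : 0 < ε)
    (hVK : ContinuousOn V (closedBall c ρ)) (hV : ContDiffOn ℝ 1 V (ball c ρ))
    (hV_tangent : ∀ x ∈ sphere c ρ, ⟪V x, x - c⟫_ℝ = 0) :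
    ∀ᶠ k in atTop, |∫ x in ball c ρ, ballCutoff c ρ k x * divergence V x ∂μ| ≤
      ε * (finrank ℝ E * μ.real (ball c ρ)) := by
  obtain ⟨δ, hδ, h_radial⟩ := exists_abs_inner_le_mul_norm_sq hρ hε hVK hV_tangent
  filter_upwards [eventually_gt_atTop 0, eventually_gt_atTop (2 / δ)] with k hk hkδ
  have h_pointwise : ∀ x ∈ ball c ρ, |fderiv ℝ (ballCutoff c ρ k) x (V x)| ≤
      ε * -fderiv ℝ (ballCutoff c ρ k) x (x - c) := by
    intro x hx
    rcases lt_or_ge (ρ ^ 2 - ‖x - c‖ ^ 2) δ with h_near | h_far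
    · exact abs_fderiv_ballCutoff_le hk.le (h_radial x hx h_near)
    · have h_steep : 2 < k * (ρ ^ 2 - ‖x - c‖ ^ 2) :=
        ((div_lt_iff₀ hδ).1 hkδ).trans_le (mul_le_mul_of_nonneg_left h_far hk.le)
      simp [fderiv_ballCutoff_eq_zero h_steep]
  have h_int := integrableOn_fderiv_ballCutoff_apply (μ := μ) (k := k) hVK
  have h_int_radial := integrableOn_fderiv_ballCutoff_apply (μ := μ) (c := c) (ρ := ρ) (k := k)
    (V := fun y => y - c) (by fun_prop)
  calc |∫ x in ball c ρ, ballCutoff c ρ k x * divergence V x ∂μ|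
      = |∫ x in ball c ρ, fderiv ℝ (ballCutoff c ρ k) x (V x) ∂μ| := by
        rw [setIntegral_ballCutoff_mul_divergence hρ.le hk hV, abs_neg]
    _ ≤ ∫ x in ball c ρ, |fderiv ℝ (ballCutoff c ρ k) x (V x)| ∂μ := abs_integral_le_integral_abs
    _ ≤ ∫ x in ball c ρ, ε * -fderiv ℝ (ballCutoff c ρ k) x (x - c) ∂μ :=
        setIntegral_mono_on h_int.abs (h_int_radial.neg.const_mul ε) measurableSet_ball h_pointwise
    _ = ε * ∫ x in ball c ρ, -fderiv ℝ (ballCutoff c ρ k) x (x - c) ∂μ := integral_const_mul _ _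
    _ ≤ ε * (finrank ℝ E * μ.real (ball c ρ)) :=
        mul_le_mul_of_nonneg_left (setIntegral_neg_fderiv_ballCutoff_le hρ.le hk) hε.le

theorem setIntegral_ball_divergence_eq_zero (hρ : 0 < ρ) (hVK : ContinuousOn V (closedBall c ρ))
    (hV : ContDiffOn ℝ 1 V (ball c ρ)) (hV_tangent : ∀ x ∈ sphere c ρ, ⟪V x, x - c⟫_ℝ = 0)
    (hV_int : IntegrableOn (divergence V) (ball c ρ) μ) :
    ∫ x in ball c ρ, divergence V x ∂μ = 0 := by
  have h_tendsto : Tendsto (fun k => ∫ x in ball c ρ, ballCutoff c ρ k x * divergence V x ∂μ) atTop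
      (𝓝 (∫ x in ball c ρ, divergence V x ∂μ)) := by
    refine tendsto_integral_filter_of_dominated_convergence (fun x => ‖divergence V x‖)
      (.of_forall fun k => contDiff_ballCutoff.continuous.aestronglyMeasurable.mul hV_int.1)
      (.of_forall fun k => .of_forall fun x => ?_) hV_int.norm ?_
    · rw [norm_mul]
      exact mul_le_of_le_one_left (norm_nonneg _) norm_ballCutoff_le_one
    · filter_upwards [ae_restrict_mem measurableSet_ball] with x hx
      simpa using (tendsto_ballCutoff hx).mul_const (divergence V x)
  have h_le : ∀ ε > 0, |∫ x in ball c ρ, divergence V x ∂μ| ≤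
      ε * (finrank ℝ E * μ.real (ball c ρ)) := fun ε hε =>
    le_of_tendsto h_tendsto.abs
      (eventually_abs_setIntegral_ballCutoff_mul_divergence_le hρ hε hVK hV hV_tangent)
  have h_zero : Tendsto (fun ε : ℝ => ε * (finrank ℝ E * μ.real (ball c ρ))) (𝓝[>] 0) (𝓝 0) :=
    (by fun_prop : Continuous fun ε : ℝ => ε * (finrank ℝ E * μ.real (ball c ρ))).tendsto' 0 0
      (zero_mul _) |>.mono_left nhdsWithin_le_nhds
  refine abs_nonpos_iff.1 (ge_of_tendsto h_zero ?_)
  filter_upwards [self_mem_nhdsWithin] with ε hε using h_le ε hε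

end TangentialField

section Gradient

variable {E : Type*} [NormedAddCommGroup E] [InnerProductSpace ℝ E]
  {u : E → ℝ} {s : Set E} {c : E} {ρ : ℝ}

lemma uniqueDiffOn_closedBall (hρ : 0 < ρ) : UniqueDiffOn ℝ (closedBall c ρ) :=
  uniqueDiffOn_convex (convex_closedBall c ρ)
    ⟨c, ball_subset_interior_closedBall (mem_ball_self hρ)⟩

lemma mul_norm_sq_le_two_mul_inner_add {α : ℝ} (hα : 0 < α) (g h : E) :
    α * ‖g‖ ^ 2 ≤ 2 * ⟪α • g - h, g⟫_ℝ + ‖h‖ ^ 2 / α := by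
  have h_sq : 0 ≤ α * ‖g - α⁻¹ • h‖ ^ 2 := by positivity
  rw [norm_sub_sq_real, norm_smul, inner_smul_right, real_inner_comm,
    Real.norm_of_nonneg (inv_nonneg.2 hα.le)] at h_sq
  rw [inner_sub_left, inner_smul_left, real_inner_self_eq_norm_sq]
  simp only [conj_trivial]
  field_simp at h_sq ⊢
  linarith

variable [CompleteSpace E]

lemma continuousOn_gradientWithin (hs : UniqueDiffOn ℝ s) (hu : ContDiffOn ℝ 1 u s) :
    ContinuousOn (gradientWithin u s) s :=
  (toDual ℝ E).symm.continuous.comp_continuousOn (hu.continuousOn_fderivWithin hs le_rfl)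

lemma contDiffAt_gradient {m n : WithTop ℕ∞} {x : E} (hu : ContDiffAt ℝ n u x)
    (hmn : m + 1 ≤ n) : ContDiffAt ℝ m (∇ u) x :=
  (toDual ℝ E).symm.contDiff.contDiffAt.comp x (hu.fderiv_right hmn)

lemma gradientWithin_closedBall {x : E} (hx : x ∈ ball c ρ) :
    gradientWithin u (closedBall c ρ) x = ∇ u x := by
  rw [gradientWithin, gradient, fderivWithin_of_mem_nhds (closedBall_mem_nhds_of_mem hx)]

lemma gradient_sub {f g : E → ℝ} {x : E} (hf : DifferentiableAt ℝ f x)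
    (hg : DifferentiableAt ℝ g x) : ∇ (fun y => f y - g y) x = ∇ f x - ∇ g x := by
  simp [gradient, fderiv_fun_sub hf hg]

end Gradient

section EnergyEstimate

variable {E : Type*} [NormedAddCommGroup E] [InnerProductSpace ℝ E] [FiniteDimensional ℝ E]
  [MeasurableSpace E] [BorelSpace E] {μ : Measure E} [μ.IsAddHaarMeasure]
  {F H : E → E} {a u : E → ℝ} {c : E} {ρ : ℝ}

lemma integrableOn_inner_gradient (hρ : 0 < ρ) (hF : ContinuousOn F (closedBall c ρ))
    (hu : ContDiffOn ℝ 1 u (closedBall c ρ)) :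
    IntegrableOn (fun x => ⟪F x, ∇ u x⟫_ℝ) (ball c ρ) μ :=
  (integrableOn_ball_of_continuousOn_closedBall
    (hF.inner (𝕜 := ℝ) (continuousOn_gradientWithin (uniqueDiffOn_closedBall hρ) hu))).congr_fun
    (fun _ hx => by simp only [gradientWithin_closedBall hx]) measurableSet_ball

lemma integrableOn_mul_norm_gradient_sq (hρ : 0 < ρ) (ha : ContinuousOn a (closedBall c ρ))
    (hu : ContDiffOn ℝ 1 u (closedBall c ρ)) :
    IntegrableOn (fun x => a x * ‖∇ u x‖ ^ 2) (ball c ρ) μ :=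
  (integrableOn_ball_of_continuousOn_closedBall (ha.mul
    ((continuousOn_gradientWithin (uniqueDiffOn_closedBall hρ) hu).norm.pow 2))).congr_fun
    (fun _ hx => by simp [gradientWithin_closedBall hx]) measurableSet_ball

lemma setIntegral_inner_gradient_eq_zero (hρ : 0 < ρ) (hFK : ContinuousOn F (closedBall c ρ))
    (hF : ContDiffOn ℝ 1 F (ball c ρ)) (hF_tangent : ∀ x ∈ sphere c ρ, ⟪F x, x - c⟫_ℝ = 0)
    (hF_div : ∀ x ∈ ball c ρ, divergence F x = 0) (hu : ContDiffOn ℝ 1 u (closedBall c ρ)) :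
    ∫ x in ball c ρ, ⟪F x, ∇ u x⟫_ℝ ∂μ = 0 := by
  have hu_ball : ContDiffOn ℝ 1 u (ball c ρ) := hu.mono ball_subset_closedBall
  have h_div : Set.EqOn (fun x => ⟪F x, ∇ u x⟫_ℝ) (divergence fun y => u y • F y) (ball c ρ) := by
    intro x hx
    have h_nhds := isOpen_ball.mem_nhds hx
    have hu_diff := (hu_ball.differentiableOn one_ne_zero).differentiableAt h_nhds
    have hF_diff := (hF.differentiableOn one_ne_zero).differentiableAt h_nhds
    simp only [divergence_smul hu_diff hF_diff, hF_div x hx, mul_zero, zero_add,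
      ← inner_gradient_left, real_inner_comm]
  rw [setIntegral_congr_fun measurableSet_ball h_div]
  refine setIntegral_ball_divergence_eq_zero hρ (hu.continuousOn.smul hFK) (hu_ball.smul hF)
    (fun x hx => ?_) ((integrableOn_inner_gradient hρ hFK hu).congr_fun h_div measurableSet_ball)
  rw [inner_smul_left, hF_tangent x hx, mul_zero]

theorem setIntegral_mul_norm_gradient_sq_le (hρ : 0 < ρ) (ha_pos : ∀ x ∈ closedBall c ρ, 0 < a x)
    (haK : ContinuousOn a (closedBall c ρ)) (ha : ContDiffOn ℝ 1 a (ball c ρ))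
    (huK : ContDiffOn ℝ 1 u (closedBall c ρ)) (hu : ContDiffOn ℝ 2 u (ball c ρ))
    (hu_normal : ∀ x ∈ sphere c ρ, fderivWithin ℝ u (closedBall c ρ) x (x - c) = 0)
    (hHK : ContinuousOn H (closedBall c ρ)) (hH : ContDiffOn ℝ 1 H (ball c ρ))
    (hH_tangent : ∀ x ∈ sphere c ρ, ⟪H x, x - c⟫_ℝ = 0)
    (h_div : ∀ x ∈ ball c ρ, divergence (fun y => a y • ∇ u y) x = divergence H x) :
    ∫ x in ball c ρ, a x * ‖∇ u x‖ ^ 2 ∂μ ≤ ∫ x in ball c ρ, ‖H x‖ ^ 2 / a x ∂μ := by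
  set G : E → E := gradientWithin u (closedBall c ρ) with hG
  have hGK : ContinuousOn G (closedBall c ρ) :=
    continuousOn_gradientWithin (uniqueDiffOn_closedBall hρ) huK
  have hFK : ContinuousOn (fun x => a x • G x - H x) (closedBall c ρ) := (haK.smul hGK).sub hHK
  have h_flux : ContDiffOn ℝ 1 (fun x => a x • ∇ u x) (ball c ρ) :=
    ha.smul fun x hx => (contDiffAt_gradient (hu.contDiffAt (isOpen_ball.mem_nhds hx))
      (by norm_num)).contDiffWithinAt
  have hF_eqOn : Set.EqOn (fun x => a x • G x - H x) (fun x => a x • ∇ u x - H x) (ball c ρ) :=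
    fun x hx => by simp only [hG, gradientWithin_closedBall hx]
  have h_orth : ∫ x in ball c ρ, ⟪a x • G x - H x, ∇ u x⟫_ℝ ∂μ = 0 := by
    refine setIntegral_inner_gradient_eq_zero hρ hFK ((h_flux.sub hH).congr hF_eqOn)
      (fun x hx => ?_) (fun x hx => ?_) huK
    · rw [inner_sub_left, inner_smul_left, hG, inner_gradientWithin_left, hu_normal x hx,
        hH_tangent x hx, mul_zero, sub_zero]
    · have h_nhds := isOpen_ball.mem_nhds hx
      rw [divergence_congr (hF_eqOn.eventuallyEq_of_mem h_nhds), divergence_sub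
        ((h_flux.differentiableOn one_ne_zero).differentiableAt h_nhds)
        ((hH.differentiableOn one_ne_zero).differentiableAt h_nhds), h_div x hx, sub_self]
  have h_int_orth := integrableOn_inner_gradient (μ := μ) hρ hFK huK
  have h_int_source : IntegrableOn (fun x => ‖H x‖ ^ 2 / a x) (ball c ρ) μ :=
    integrableOn_ball_of_continuousOn_closedBall
      ((hHK.norm.pow 2).div haK fun x hx => (ha_pos x hx).ne')
  calc ∫ x in ball c ρ, a x * ‖∇ u x‖ ^ 2 ∂μ
      ≤ ∫ x in ball c ρ, 2 * ⟪a x • G x - H x, ∇ u x⟫_ℝ + ‖H x‖ ^ 2 / a x ∂μ := by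
        refine setIntegral_mono_on (integrableOn_mul_norm_gradient_sq hρ haK huK)
          ((h_int_orth.const_mul 2).add h_int_source) measurableSet_ball fun x hx => ?_
        rw [hG, gradientWithin_closedBall hx]
        exact mul_norm_sq_le_two_mul_inner_add (ha_pos x (ball_subset_closedBall hx)) _ _
    _ = ∫ x in ball c ρ, ‖H x‖ ^ 2 / a x ∂μ := by
        rw [integral_add (h_int_orth.const_mul 2) h_int_source, integral_const_mul, h_orth,
          mul_zero, zero_add]

end EnergyEstimate

section Comparison

variable {E : Type*} [NormedAddCommGroup E] [InnerProductSpace ℝ E] {e c x : E} {ρ : ℝ}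

/-- The comparison potential for the ball of centre `c` translating in the direction `e`: the
potential `⟪e, x - c⟫` of the uniform flow `e`, corrected by a quadratic term so that its normal
derivative on every sphere of centre `c` and radius `ρ` is `⟪n, e⟫ - ρ / (d * ⟪e, c⟫)`, where `d`
is the dimension. -/
noncomputable def comparisonPotential (e c x : E) : ℝ :=
  ⟪e, x - c⟫_ℝ - ‖x - c‖ ^ 2 / (2 * finrank ℝ E * ⟪e, c⟫_ℝ)

/-- A field along `e` vanishing on the sphere of centre `c` and radius `ρ`, whose divergence is
the defect `-div (⟪e, x⟫ ∇ψ)` of the comparison potential `ψ`. -/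
noncomputable def defectField (e c : E) (ρ : ℝ) (x : E) : E :=
  ((1 + 1 / finrank ℝ E) / (2 * ⟪e, c⟫_ℝ) * (‖x - c‖ ^ 2 - ρ ^ 2)) • e

lemma contDiff_comparisonPotential {n : WithTop ℕ∞} : ContDiff ℝ n (comparisonPotential e c) :=
  (contDiff_const.inner ℝ (contDiff_id.sub contDiff_const)).sub
    (((contDiff_id.sub contDiff_const).norm_sq ℝ).div_const _)

lemma contDiff_defectField {n : WithTop ℕ∞} : ContDiff ℝ n (defectField e c ρ) :=
  (contDiff_const.mul (((contDiff_id.sub contDiff_const).norm_sq ℝ).sub contDiff_const)).smul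
    contDiff_const

lemma defectField_eq_zero (hx : x ∈ sphere c ρ) : defectField e c ρ x = 0 := by
  simp [defectField, mem_sphere_iff_norm.1 hx]

lemma abs_inner_sub_inner_le (he : ‖e‖ = 1) (hx : x ∈ closedBall c ρ) :
    |⟪e, x⟫_ℝ - ⟪e, c⟫_ℝ| ≤ ρ := by
  rw [← inner_sub_right]
  simpa [he] using (abs_real_inner_le_norm e (x - c)).trans
    (mul_le_mul_of_nonneg_left (mem_closedBall_iff_norm.1 hx) (norm_nonneg e))

lemma abs_norm_add_sq_sub_one_le {t : ℝ} (he : ‖e‖ = 1) (ht : 0 < t) (q : E) :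
    |‖q + e‖ ^ 2 - 1| ≤ t + (1 + 1 / t) * ‖q‖ ^ 2 := by
  have h_cauchy : |⟪q, e⟫_ℝ| ≤ ‖q‖ := by simpa [he] using abs_real_inner_le_norm q e
  have h_young : 2 * ‖q‖ ≤ t + 1 / t * ‖q‖ ^ 2 := by
    have h_sq : 0 ≤ 1 / t * (t - ‖q‖) ^ 2 := by positivity
    field_simp at h_sq ⊢
    linarith
  rw [norm_add_sq_real, he, abs_le]
  constructor <;> nlinarith [abs_le.1 h_cauchy, sq_nonneg ‖q‖]

lemma abs_mul_norm_sq_sub_le {w p : E} {a R : ℝ} (he : ‖e‖ = 1) (hρ : 0 < ρ) (hρR : 2 * ρ ≤ R)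
    (ha : |a - R| ≤ ρ) (hp : ‖p‖ ≤ ρ / R) :
    |a * ‖w + (e - p)‖ ^ 2 - R| ≤ 7 * ρ + 3 * R / ρ * (a * ‖w‖ ^ 2) := by
  have hR : 0 < R := by linarith
  obtain ⟨ha_lower, ha_upper⟩ := abs_le.1 ha
  have ha_pos : 0 < a := by linarith
  obtain ⟨t, rfl⟩ : ∃ t, ρ = t * R := ⟨ρ / R, (div_mul_cancel₀ ρ hR.ne').symm⟩
  have ht : 0 < t := pos_of_mul_pos_left hρ hR.le
  have ht_le : t ≤ 1 / 2 := by nlinarith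
  rw [mul_div_cancel_right₀ _ hR.ne'] at hp
  have h_dist : ‖w - p‖ ^ 2 ≤ 2 * ‖w‖ ^ 2 + 2 * t ^ 2 := by
    nlinarith [parallelogram_law_with_norm ℝ w p, sq_nonneg ‖w + p‖, norm_nonneg p]
  have h_dev : |‖w + (e - p)‖ ^ 2 - 1| ≤ 4 * t + 3 / t * ‖w‖ ^ 2 := by
    have h_coeff : 1 + 1 / t ≤ 3 / 2 / t := by
      field_simp
      linarith
    calc |‖w + (e - p)‖ ^ 2 - 1| ≤ t + (1 + 1 / t) * ‖w - p‖ ^ 2 := by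
          simpa only [sub_add_eq_add_sub, add_sub_assoc] using
            abs_norm_add_sq_sub_one_le he ht (w - p)
      _ ≤ t + 3 / 2 / t * (2 * ‖w‖ ^ 2 + 2 * t ^ 2) := by gcongr
      _ = 4 * t + 3 / t * ‖w‖ ^ 2 := by field_simp; ring
  calc |a * ‖w + (e - p)‖ ^ 2 - R| = |(a - R) + a * (‖w + (e - p)‖ ^ 2 - 1)| := by ring_nf
    _ ≤ |a - R| + a * |‖w + (e - p)‖ ^ 2 - 1| :=
      (abs_add_le _ _).trans_eq (by rw [abs_mul, abs_of_pos ha_pos])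
    _ ≤ t * R + a * (4 * t + 3 / t * ‖w‖ ^ 2) := by gcongr
    _ ≤ 7 * (t * R) + 3 * R / (t * R) * (a * ‖w‖ ^ 2) := by
      rw [mul_div_mul_right _ _ hR.ne']
      nlinarith

lemma norm_defectField_sq_div_le (he : ‖e‖ = 1) (hρ : 0 < ρ) (hρc : 2 * ρ ≤ ⟪e, c⟫_ℝ)
    (hx : x ∈ closedBall c ρ) :
    ‖defectField e c ρ x‖ ^ 2 / ⟪e, x⟫_ℝ ≤ 2 * ρ ^ 4 / ⟪e, c⟫_ℝ ^ 3 := by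
  have hc : 0 < ⟪e, c⟫_ℝ := by linarith
  have h_weight : ⟪e, c⟫_ℝ / 2 ≤ ⟪e, x⟫_ℝ := by
    linarith [abs_le.1 (abs_inner_sub_inner_le he hx)]
  have h_norm : ‖defectField e c ρ x‖ ≤ ρ ^ 2 / ⟪e, c⟫_ℝ := by
    have h_dim : (1 + 1 / finrank ℝ E : ℝ) ≤ 2 := by
      rw [one_div]
      linarith [Nat.cast_inv_le_one (α := ℝ) (finrank ℝ E)]
    have h_sq : |‖x - c‖ ^ 2 - ρ ^ 2| ≤ ρ ^ 2 := by
      have := pow_le_pow_left₀ (norm_nonneg _) (mem_closedBall_iff_norm.1 hx) 2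
      rw [abs_le]
      constructor <;> linarith [sq_nonneg ‖x - c‖]
    rw [defectField, norm_smul, he, mul_one, norm_mul, Real.norm_of_nonneg (by positivity),
      Real.norm_eq_abs]
    calc _ ≤ 2 / (2 * ⟪e, c⟫_ℝ) * ρ ^ 2 := by gcongr
      _ = ρ ^ 2 / ⟪e, c⟫_ℝ := by field_simp
  calc ‖defectField e c ρ x‖ ^ 2 / ⟪e, x⟫_ℝ ≤ (ρ ^ 2 / ⟪e, c⟫_ℝ) ^ 2 / (⟪e, c⟫_ℝ / 2) := by gcongr
    _ = 2 * ρ ^ 4 / ⟪e, c⟫_ℝ ^ 3 := by field_simp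

variable [FiniteDimensional ℝ E] {φ : E → ℝ}

lemma hasGradientAt_comparisonPotential : HasGradientAt (comparisonPotential e c)
    (e - (finrank ℝ E * ⟪e, c⟫_ℝ)⁻¹ • (x - c)) x := by
  have h_sub : HasFDerivAt (fun y => y - c) (ContinuousLinearMap.id ℝ E) x :=
    (hasFDerivAt_id x).sub_const c
  refine (((hasFDerivAt_const e x).inner ℝ h_sub).sub
    (h_sub.norm_sq.mul_const (2 * finrank ℝ E * ⟪e, c⟫_ℝ)⁻¹)).congr_fderiv ?_
  ext v
  simp only [mul_inv_rev, map_sub, ContinuousLinearMap.comp_id, sub_apply,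
    ContinuousLinearMap.comp_apply, ContinuousLinearMap.prod_apply, zero_apply,
    ContinuousLinearMap.id_apply, fderivInnerCLM_apply, inner_zero_left, add_zero, smul_apply,
    coe_innerSL_apply, nsmul_eq_mul, Nat.cast_ofNat, smul_eq_mul, map_smul, toDual_apply_apply]
  ring

lemma divergence_defectField :
    divergence (defectField e c ρ) x = (1 + 1 / finrank ℝ E) / ⟪e, c⟫_ℝ * ⟪e, x - c⟫_ℝ := by
  have h_coeff : HasFDerivAt (fun y => (1 + 1 / finrank ℝ E) / (2 * ⟪e, c⟫_ℝ) *
      (‖y - c‖ ^ 2 - ρ ^ 2)) _ x :=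
    ((((hasFDerivAt_id x).sub_const c).norm_sq).sub_const (ρ ^ 2)).const_mul _
  unfold defectField
  rw [divergence_smul h_coeff.differentiableAt (differentiableAt_const e), divergence_const,
    h_coeff.fderiv]
  simp only [mul_zero, id_eq, map_sub, ContinuousLinearMap.comp_id, smul_apply, sub_apply,
    coe_innerSL_apply, real_inner_comm, nsmul_eq_mul, Nat.cast_ofNat, smul_eq_mul, zero_add,
    inner_sub_right]
  ring

lemma divergence_inner_smul_gradient_comparisonPotential (he : ‖e‖ = 1) (hc : ⟪e, c⟫_ℝ ≠ 0) :
    divergence (fun y => ⟪e, y⟫_ℝ • ∇ (comparisonPotential e c) y) x =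
      -divergence (defectField e c ρ) x := by
  have : Nontrivial E := ⟨e, 0, by rintro rfl; simp at he⟩
  have h_dim : (finrank ℝ E : ℝ) ≠ 0 := Nat.cast_ne_zero.2 finrank_pos.ne'
  have h_flux : divergence (fun y => e - (finrank ℝ E * ⟪e, c⟫_ℝ)⁻¹ • (y - c)) x =
      -(finrank ℝ E * ⟪e, c⟫_ℝ)⁻¹ * finrank ℝ E := by
    rw [divergence_sub (by fun_prop) (by fun_prop), divergence_const,
      divergence_smul (by fun_prop) (by fun_prop), divergence_sub_const]
    simp
  have h_grad : ∇ (comparisonPotential e c) = fun y =>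
      e - (finrank ℝ E * ⟪e, c⟫_ℝ)⁻¹ • (y - c) :=
    funext fun y => hasGradientAt_comparisonPotential.gradient
  have h_weight : HasFDerivAt (fun y => ⟪e, y⟫_ℝ) (innerSL ℝ e) x := (innerSL ℝ e).hasFDerivAt
  rw [h_grad, divergence_smul h_weight.differentiableAt (by fun_prop), h_flux, h_weight.fderiv,
    divergence_defectField]
  simp only [coe_innerSL_apply, inner_sub_right, inner_smul_right, real_inner_self_eq_norm_sq, he]
  field_simp
  ring

lemma fderivWithin_sub_comparisonPotential_eq_zero (hρ : 0 < ρ)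
    (hφ : DifferentiableWithinAt ℝ φ (closedBall c ρ) x) (hx : x ∈ sphere c ρ)
    (h_normal : fderivWithin ℝ φ (closedBall c ρ) x (ρ⁻¹ • (x - c)) =
      ⟪e, ρ⁻¹ • (x - c)⟫_ℝ - ρ / (finrank ℝ E * ⟪e, c⟫_ℝ)) :
    fderivWithin ℝ (fun y => φ y - comparisonPotential e c y) (closedBall c ρ) x (x - c) = 0 := by
  have h_unique := uniqueDiffOn_closedBall hρ x (sphere_subset_closedBall hx)
  have h_grad := hasGradientAt_comparisonPotential (e := e) (c := c) (x := x)
  rw [map_smul, inner_smul_right, smul_eq_mul] at h_normal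
  rw [fderivWithin_fun_sub h_unique hφ h_grad.differentiableAt.differentiableWithinAt,
    fderivWithin_eq_fderiv h_unique h_grad.differentiableAt, sub_apply,
    h_grad.fderiv_apply, inner_sub_left, inner_smul_left, real_inner_self_eq_norm_sq,
    mem_sphere_iff_norm.1 hx]
  field_simp at h_normal
  rw [h_normal, conj_trivial]
  ring

lemma differentiableAt_inner_smul_gradient (hφ : ContDiffAt ℝ 2 φ x) :
    DifferentiableAt ℝ (fun y => ⟪e, y⟫_ℝ • ∇ φ y) x :=
  ((differentiableAt_const e).inner ℝ differentiableAt_id).smul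
    ((contDiffAt_gradient hφ (m := 1) (by norm_num)).differentiableAt one_ne_zero)

lemma divergence_inner_smul_gradient_sub_comparisonPotential (he : ‖e‖ = 1) (hc : ⟪e, c⟫_ℝ ≠ 0)
    (hφ : ContDiffAt ℝ 2 φ x) (hφ_div : divergence (fun y => ⟪e, y⟫_ℝ • ∇ φ y) x = 0) :
    divergence (fun y => ⟪e, y⟫_ℝ • ∇ (fun z => φ z - comparisonPotential e c z) y) x =
      divergence (defectField e c ρ) x := by
  have h_sub : (fun y => ⟪e, y⟫_ℝ • ∇ (fun z => φ z - comparisonPotential e c z) y) =ᶠ[𝓝 x]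
      fun y => ⟪e, y⟫_ℝ • ∇ φ y - ⟪e, y⟫_ℝ • ∇ (comparisonPotential e c) y := by
    filter_upwards [hφ.eventually (by norm_num)] with y hy
    rw [gradient_sub (hy.differentiableAt two_ne_zero)
      hasGradientAt_comparisonPotential.differentiableAt, smul_sub]
  rw [divergence_congr h_sub, divergence_sub (differentiableAt_inner_smul_gradient hφ)
    (differentiableAt_inner_smul_gradient contDiff_comparisonPotential.contDiffAt), hφ_div,
    divergence_inner_smul_gradient_comparisonPotential he hc (ρ := ρ), zero_sub, neg_neg]

lemma abs_inner_mul_norm_gradient_sq_sub_le (he : ‖e‖ = 1) (hρ : 0 < ρ) (hρc : 2 * ρ ≤ ⟪e, c⟫_ℝ)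
    (hx : x ∈ closedBall c ρ) (hφ : DifferentiableAt ℝ φ x) :
    |⟪e, x⟫_ℝ * ‖∇ φ x‖ ^ 2 - ⟪e, c⟫_ℝ| ≤ 7 * ρ + 3 * ⟪e, c⟫_ℝ / ρ *
      (⟪e, x⟫_ℝ * ‖∇ (fun y => φ y - comparisonPotential e c y) x‖ ^ 2) := by
  have hc : 0 < ⟪e, c⟫_ℝ := by linarith
  have h_grad := hasGradientAt_comparisonPotential (e := e) (c := c) (x := x)
  have h_split : ∇ φ x = ∇ (fun y => φ y - comparisonPotential e c y) x +
      (e - (finrank ℝ E * ⟪e, c⟫_ℝ)⁻¹ • (x - c)) := by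
    rw [gradient_sub hφ h_grad.differentiableAt, h_grad.gradient, sub_add_cancel]
  rw [h_split]
  refine abs_mul_norm_sq_sub_le he hρ hρc (abs_inner_sub_inner_le he hx) ?_
  calc ‖(finrank ℝ E * ⟪e, c⟫_ℝ)⁻¹ • (x - c)‖
      = (finrank ℝ E : ℝ)⁻¹ * ‖x - c‖ / ⟪e, c⟫_ℝ := by
        rw [norm_smul, Real.norm_of_nonneg (by positivity)]
        ring
    _ ≤ 1 * ρ / ⟪e, c⟫_ℝ := by
        gcongr
        exacts [Nat.cast_inv_le_one _, mem_closedBall_iff_norm.1 hx]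
    _ = ρ / ⟪e, c⟫_ℝ := by rw [one_mul]

variable [MeasurableSpace E] [BorelSpace E] {μ : Measure E} [μ.IsAddHaarMeasure]

lemma setIntegral_inner_mul_norm_gradient_sub_comparisonPotential_sq_le (he : ‖e‖ = 1) (hρ : 0 < ρ)
    (hρc : 2 * ρ ≤ ⟪e, c⟫_ℝ) (hφK : ContDiffOn ℝ 1 φ (closedBall c ρ))
    (hφ : ContDiffOn ℝ 2 φ (ball c ρ))
    (hφ_div : ∀ x ∈ ball c ρ, divergence (fun y => ⟪e, y⟫_ℝ • ∇ φ y) x = 0)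
    (hφ_normal : ∀ x ∈ sphere c ρ, fderivWithin ℝ φ (closedBall c ρ) x (ρ⁻¹ • (x - c)) =
      ⟪e, ρ⁻¹ • (x - c)⟫_ℝ - ρ / (finrank ℝ E * ⟪e, c⟫_ℝ)) :
    ∫ x in ball c ρ, ⟪e, x⟫_ℝ * ‖∇ (fun y => φ y - comparisonPotential e c y) x‖ ^ 2 ∂μ ≤
      2 * ρ ^ 4 / ⟪e, c⟫_ℝ ^ 3 * μ.real (ball c ρ) := by
  have hc : 0 < ⟪e, c⟫_ℝ := by linarith
  have h_weight_pos : ∀ x ∈ closedBall c ρ, 0 < ⟪e, x⟫_ℝ := fun x hx => by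
    linarith [abs_le.1 (abs_inner_sub_inner_le he hx)]
  have h_weight : ContDiff ℝ 1 fun x => ⟪e, x⟫_ℝ := contDiff_const.inner ℝ contDiff_id
  have h_field {s : Set E} : ContDiffOn ℝ 1 (defectField e c ρ) s := contDiff_defectField.contDiffOn
  have h_normal := fun x hx => fderivWithin_sub_comparisonPotential_eq_zero hρ
    (hφK.differentiableOn one_ne_zero x (sphere_subset_closedBall hx)) hx (hφ_normal x hx)
  have h_div := fun x hx => divergence_inner_smul_gradient_sub_comparisonPotential (ρ := ρ) he
    hc.ne' (hφ.contDiffAt (isOpen_ball.mem_nhds hx)) (hφ_div x hx)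
  calc ∫ x in ball c ρ, ⟪e, x⟫_ℝ * ‖∇ (fun y => φ y - comparisonPotential e c y) x‖ ^ 2 ∂μ
      ≤ ∫ x in ball c ρ, ‖defectField e c ρ x‖ ^ 2 / ⟪e, x⟫_ℝ ∂μ :=
        setIntegral_mul_norm_gradient_sq_le hρ h_weight_pos h_weight.continuous.continuousOn
          h_weight.contDiffOn (hφK.sub contDiff_comparisonPotential.contDiffOn)
          (hφ.sub contDiff_comparisonPotential.contDiffOn) h_normal h_field.continuousOn h_field
          (fun x hx => by rw [defectField_eq_zero hx, inner_zero_left]) h_div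
    _ ≤ ∫ x in ball c ρ, 2 * ρ ^ 4 / ⟪e, c⟫_ℝ ^ 3 ∂μ := by
        refine setIntegral_mono_on (integrableOn_ball_of_continuousOn_closedBall ?_)
          (integrableOn_const measure_ball_lt_top.ne) measurableSet_ball fun x hx =>
          norm_defectField_sq_div_le he hρ hρc (ball_subset_closedBall hx)
        exact (h_field.continuousOn.norm.pow 2).div h_weight.continuous.continuousOn
          fun x hx => (h_weight_pos x hx).ne'
    _ = 2 * ρ ^ 4 / ⟪e, c⟫_ℝ ^ 3 * μ.real (ball c ρ) := by
        rw [setIntegral_const, smul_eq_mul, mul_comm]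

theorem abs_setIntegral_inner_mul_norm_gradient_sq_sub_le (he : ‖e‖ = 1) (hρ : 0 < ρ)
    (hρc : 2 * ρ ≤ ⟪e, c⟫_ℝ) (hφK : ContDiffOn ℝ 1 φ (closedBall c ρ))
    (hφ : ContDiffOn ℝ 2 φ (ball c ρ))
    (hφ_div : ∀ x ∈ ball c ρ, divergence (fun y => ⟪e, y⟫_ℝ • ∇ φ y) x = 0)
    (hφ_normal : ∀ x ∈ sphere c ρ, fderivWithin ℝ φ (closedBall c ρ) x (ρ⁻¹ • (x - c)) =
      ⟪e, ρ⁻¹ • (x - c)⟫_ℝ - ρ / (finrank ℝ E * ⟪e, c⟫_ℝ)) :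
    |∫ x in ball c ρ, ⟪e, x⟫_ℝ * ‖∇ φ x‖ ^ 2 ∂μ - ⟪e, c⟫_ℝ * μ.real (ball c ρ)| ≤
      9 * ρ * μ.real (ball c ρ) := by
  set u : E → ℝ := fun y => φ y - comparisonPotential e c y
  have hc : 0 < ⟪e, c⟫_ℝ := by linarith
  have h_pointwise : ∀ x ∈ ball c ρ, |⟪e, x⟫_ℝ * ‖∇ φ x‖ ^ 2 - ⟪e, c⟫_ℝ| ≤
      7 * ρ + 3 * ⟪e, c⟫_ℝ / ρ * (⟪e, x⟫_ℝ * ‖∇ u x‖ ^ 2) := fun x hx =>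
    abs_inner_mul_norm_gradient_sq_sub_le he hρ hρc (ball_subset_closedBall hx)
      ((hφ.differentiableOn two_ne_zero).differentiableAt (isOpen_ball.mem_nhds hx))
  have h_weight : Continuous fun x => ⟪e, x⟫_ℝ := by fun_prop
  have h_int_φ : IntegrableOn (fun x => ⟪e, x⟫_ℝ * ‖∇ φ x‖ ^ 2) (ball c ρ) μ :=
    integrableOn_mul_norm_gradient_sq hρ h_weight.continuousOn hφK
  have h_int_u : IntegrableOn (fun x => ⟪e, x⟫_ℝ * ‖∇ u x‖ ^ 2) (ball c ρ) μ :=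
    integrableOn_mul_norm_gradient_sq hρ h_weight.continuousOn
      (hφK.sub contDiff_comparisonPotential.contDiffOn)
  have h_int_const {r : ℝ} : IntegrableOn (fun _ => r) (ball c ρ) μ :=
    integrableOn_const measure_ball_lt_top.ne
  calc |∫ x in ball c ρ, ⟪e, x⟫_ℝ * ‖∇ φ x‖ ^ 2 ∂μ - ⟪e, c⟫_ℝ * μ.real (ball c ρ)|
      = |∫ x in ball c ρ, (⟪e, x⟫_ℝ * ‖∇ φ x‖ ^ 2 - ⟪e, c⟫_ℝ) ∂μ| := by
        rw [integral_sub h_int_φ h_int_const, setIntegral_const, smul_eq_mul, mul_comm (μ.real _)]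
    _ ≤ ∫ x in ball c ρ, |⟪e, x⟫_ℝ * ‖∇ φ x‖ ^ 2 - ⟪e, c⟫_ℝ| ∂μ := abs_integral_le_integral_abs
    _ ≤ ∫ x in ball c ρ, 7 * ρ + 3 * ⟪e, c⟫_ℝ / ρ * (⟪e, x⟫_ℝ * ‖∇ u x‖ ^ 2) ∂μ :=
        setIntegral_mono_on (h_int_φ.sub h_int_const).abs
          (h_int_const.add (h_int_u.const_mul _)) measurableSet_ball h_pointwise
    _ = 7 * ρ * μ.real (ball c ρ) +
          3 * ⟪e, c⟫_ℝ / ρ * ∫ x in ball c ρ, ⟪e, x⟫_ℝ * ‖∇ u x‖ ^ 2 ∂μ := by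
        rw [integral_add h_int_const (h_int_u.const_mul _), setIntegral_const, integral_const_mul,
          smul_eq_mul, mul_comm (μ.real _)]
    _ ≤ 7 * ρ * μ.real (ball c ρ) +
          3 * ⟪e, c⟫_ℝ / ρ * (2 * ρ ^ 4 / ⟪e, c⟫_ℝ ^ 3 * μ.real (ball c ρ)) := by
        gcongr
        exact setIntegral_inner_mul_norm_gradient_sub_comparisonPotential_sq_le he hρ hρc hφK hφ
          hφ_div hφ_normal
    _ = (7 * ρ + 6 * ρ * (ρ / ⟪e, c⟫_ℝ) ^ 2) * μ.real (ball c ρ) := by field_simp; ring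
    _ ≤ 9 * ρ * μ.real (ball c ρ) := by
        have h_ratio : ρ / ⟪e, c⟫_ℝ ≤ 1 / 2 := by rw [div_le_iff₀ hc]; linarith
        have h_ratio_sq : (ρ / ⟪e, c⟫_ℝ) ^ 2 ≤ (1 / 2) ^ 2 := by gcongr
        gcongr
        nlinarith

end Comparison

section Coordinates

variable {ι : Type*} [Fintype ι] [DecidableEq ι] {f : EuclideanSpace ℝ ι → ℝ}
  {V : EuclideanSpace ℝ ι → EuclideanSpace ℝ ι} {x : EuclideanSpace ℝ ι}

lemma gradient_apply (i : ι) : ∇ f x i = fderiv ℝ f x (EuclideanSpace.single i 1) := by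
  rw [← inner_gradient_left, EuclideanSpace.inner_single_right]
  simp

lemma norm_gradient_sq :
    ‖∇ f x‖ ^ 2 = ∑ i, fderiv ℝ f x (EuclideanSpace.single i 1) ^ 2 := by
  simp only [EuclideanSpace.real_norm_sq_eq, gradient_apply]

lemma divergence_eq_sum_fderiv (hV : DifferentiableAt ℝ V x) :
    divergence V x = ∑ i, fderiv ℝ (fun y => V y i) x (EuclideanSpace.single i 1) := by
  rw [divergence, LinearMap.trace_eq_sum_inner _ (EuclideanSpace.basisFun ι ℝ)]
  refine Finset.sum_congr rfl fun i _ => ?_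
  have h_coord : HasFDerivAt (fun y => V y i) ((EuclideanSpace.proj i).comp (fderiv ℝ V x)) x :=
    (EuclideanSpace.proj i : EuclideanSpace ℝ ι →L[ℝ] ℝ).hasFDerivAt.comp x hV.hasFDerivAt
  rw [h_coord.fderiv]
  simp [EuclideanSpace.inner_single_left]

lemma volume_real_ball_fin_two {c : EuclideanSpace ℝ (Fin 2)} {ρ : ℝ} (hρ : 0 ≤ ρ) :
    volume.real (ball c ρ) = Real.pi * ρ ^ 2 := by
  simp [measureReal_def, EuclideanSpace.volume_ball_fin_two, hρ, Real.pi_nonneg, mul_comm]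

@[simp]
lemma ctr_apply_zero (R Z : ℝ) : ctr R Z 0 = R := rfl

theorem stmt17_general (i₀ : ι) {c : EuclideanSpace ℝ ι} {ρ : ℝ} (hρ : 0 < ρ)
    (hρc : 2 * ρ ≤ c i₀) {φ : EuclideanSpace ℝ ι → ℝ} (hφ : ContDiffOn ℝ 2 φ (ball c ρ))
    (hφK : ContDiffOn ℝ 1 φ (closedBall c ρ))
    (hφ_div : ∀ x ∈ ball c ρ, ∑ i, fderiv ℝ (fun y : EuclideanSpace ℝ ι =>
      y i₀ * fderiv ℝ φ y (EuclideanSpace.single i 1)) x (EuclideanSpace.single i 1) = 0)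
    (hφ_normal : ∀ x, dist x c = ρ → fderivWithin ℝ φ (closedBall c ρ) x (ρ⁻¹ • (x - c)) =
      ρ⁻¹ * (x i₀ - c i₀) - ρ / (Fintype.card ι * c i₀)) :
    |(∫ x in ball c ρ, x i₀ * ∑ i, fderiv ℝ φ x (EuclideanSpace.single i 1) ^ 2) -
      c i₀ * volume.real (ball c ρ)| ≤ 9 * ρ * volume.real (ball c ρ) := by
  let e : EuclideanSpace ℝ ι := EuclideanSpace.single i₀ 1
  have h_inner (y : EuclideanSpace ℝ ι) : ⟪e, y⟫_ℝ = y i₀ := by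
    simp [e, EuclideanSpace.inner_single_left]
  have h_main := abs_setIntegral_inner_mul_norm_gradient_sq_sub_le (μ := volume) (e := e) (c := c)
    (by simp [e]) hρ (by rwa [h_inner]) hφK hφ
    (fun x hx => ?_) (fun x hx => ?_)
  · simpa only [h_inner, norm_gradient_sq] using h_main
  · have h_flux : DifferentiableAt ℝ (fun y => ⟪e, y⟫_ℝ • ∇ φ y) x :=
      differentiableAt_inner_smul_gradient (hφ.contDiffAt (isOpen_ball.mem_nhds hx))
    rw [divergence_eq_sum_fderiv h_flux]
    simpa [h_inner, gradient_apply] using hφ_div x hx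
  · simpa [h_inner] using hφ_normal x hx

end Coordinates

/-- Quantitative asymptotics of the interior kinetic energy: for fixed `R > 0`, `Z`,
there are `C > 0` and `ρ₀ ∈ (0,R)` such that for every `ρ ∈ (0,ρ₀)` and every
`φ ∈ C²(B) ∩ C¹(B̄)` on `B = B_ρ((R,Z))` with `div(x₁∇φ) = 0` in `B` and
`n·∇φ = n·e₁ − ρ/(2R)` on `∂B`, one has `|∫_B x₁|∇φ|² − πRρ²| ≤ Cρ³`. -/
theorem stmt17 (R Z : ℝ) (hR : 0 < R) :
    ∃ C > (0 : ℝ), ∃ ρ₀ ∈ Set.Ioo (0 : ℝ) R, ∀ ρ ∈ Set.Ioo (0 : ℝ) ρ₀,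
      ∀ φ : EuclideanSpace ℝ (Fin 2) → ℝ,
        ContDiffOn ℝ 2 φ (Metric.ball (ctr R Z) ρ) →
        ContDiffOn ℝ 1 φ (Metric.closedBall (ctr R Z) ρ) →
        (∀ x ∈ Metric.ball (ctr R Z) ρ,
          fderiv ℝ (fun y : EuclideanSpace ℝ (Fin 2) =>
              y 0 * fderiv ℝ φ y (EuclideanSpace.single 0 1)) x (EuclideanSpace.single 0 1)
            + fderiv ℝ (fun y : EuclideanSpace ℝ (Fin 2) =>
              y 0 * fderiv ℝ φ y (EuclideanSpace.single 1 1)) x (EuclideanSpace.single 1 1)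
            = 0) →
        (∀ x : EuclideanSpace ℝ (Fin 2), dist x (ctr R Z) = ρ →
          fderivWithin ℝ φ (Metric.closedBall (ctr R Z) ρ) x (ρ⁻¹ • (x - ctr R Z))
            = ρ⁻¹ * (x 0 - R) - ρ / (2 * R)) →
        |(∫ x in Metric.ball (ctr R Z) ρ,
            x 0 * ((fderiv ℝ φ x (EuclideanSpace.single 0 1)) ^ 2
              + (fderiv ℝ φ x (EuclideanSpace.single 1 1)) ^ 2))
          - Real.pi * R * ρ ^ 2| ≤ C * ρ ^ 3 := by
  refine ⟨9 * Real.pi, by positivity, R / 2, ⟨by linarith, by linarith⟩, ?_⟩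
  intro ρ hρ φ hφ hφK hφ_div hφ_normal
  have h_main := stmt17_general 0 hρ.1 (show 2 * ρ ≤ R by linarith [hρ.2]) hφ hφK
    (by simpa using hφ_div) (by simpa using hφ_normal)
  rw [volume_real_ball_fin_two hρ.1.le] at h_main
  convert h_main using 1
  · simp only [Fin.sum_univ_two, ctr_apply_zero, mul_left_comm, mul_assoc]
  · ring
end
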